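/- Let n ≥ 3, ε > 0, and let ψ : ℝⁿ → ℝ be a smooth ℤⁿ-periodic eigenfunction of the Euclidean Laplacian with eigenvalue λ > 0. There exist constants r₀ > 0 and a₁ > 0, depending only on n, ε and the constants K₁, K₂ below, such that: if λ^{-1/2+ε} < r₀ and K₁ (λ^{-1/2+ε})ⁿ ≤ ∫_{B_{λ^{-1/2+ε}}(x)} ψ² dx ≤ K₂ (λ^{-1/2+ε})ⁿ for every x ∈ ℝⁿ (with K₁, K₂ > 0 independent of x), then every nodal domain Ω of ψ satisfies in(Ω) ≥ a₁ λ^{-1/2-ε'} where ε' = ε·(n-1)(n-2)/(2n). -/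

import Mathlib

open MeasureTheory Metric Filter Real

noncomputable section

/-- `ψ : ℝⁿ → ℝ` is `ℤⁿ`-periodic: `ψ (x + v) = ψ x` for every integer vector `v`. -/
def ZnPeriodic (n : ℕ) (ψ : EuclideanSpace ℝ (Fin n) → ℝ) : Prop :=
  ∀ (x : EuclideanSpace ℝ (Fin n)) (v : Fin n → ℤ),
    ψ (show EuclideanSpace ℝ (Fin n) from WithLp.toLp 2 (fun i => x i + (v i : ℝ))) = ψ x

/-- The Euclidean Laplacian `Δψ = ∑ᵢ ∂²ψ/∂xᵢ²`. -/
def lap (n : ℕ) (ψ : EuclideanSpace ℝ (Fin n) → ℝ) (x : EuclideanSpace ℝ (Fin n)) : ℝ :=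
  ∑ i : Fin n,
    fderiv ℝ (fun y => fderiv ℝ ψ y (EuclideanSpace.single i (1:ℝ))) x
      (EuclideanSpace.single i (1:ℝ))

/-- `Ω` is a nodal domain of `ψ`: a connected component of `{ψ ≠ 0}`. -/
def IsNodalDomain {n : ℕ} (ψ : EuclideanSpace ℝ (Fin n) → ℝ)
    (Ω : Set (EuclideanSpace ℝ (Fin n))) : Prop :=
  ∃ x, ψ x ≠ 0 ∧ Ω = connectedComponentIn {y | ψ y ≠ 0} x

/-- The inner radius of a set: the supremum of radii of open balls contained in it. -/
def innerRadius {n : ℕ} (Ω : Set (EuclideanSpace ℝ (Fin n))) : ℝ :=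
  sSup {ρ : ℝ | 0 < ρ ∧ ∃ c, Metric.ball c ρ ⊆ Ω}

/-- The fundamental domain `[0,1)ⁿ` of the torus `ℝⁿ/ℤⁿ`. -/
def fundDom (n : ℕ) : Set (EuclideanSpace ℝ (Fin n)) :=
  {x | ∀ i, x i ∈ Set.Ico (0:ℝ) 1}

/-- `S ⊆ ℕ` has full density: `#(S ∩ [1,N]) / N → 1`. -/
def FullDensity (S : Set ℕ) : Prop :=
  Filter.Tendsto (fun N => (Nat.card ↥(S ∩ Set.Icc 1 N) : ℝ) / N) Filter.atTop (nhds 1)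

/-!
A periodic eigenfunction is a finite sum of plane waves whose frequencies lie on the sphere of
radius `ω = √λ`. Write `R` for the scale `λ ^ (-1 / 2 + ε)`, so that `ω R = λ ^ ε`.

*Growth.* The mass of `ψ ^ 2` against a heat kernel is, up to an explicit factor, log-convex in the
logarithm of time. The mass bounds at scale `R` therefore bound the doubling of `ψ ^ 2` at every
scale `r ≤ ω⁻¹` by `exp (C ω R)`. Below the wavelength the ball averages of `ψ` are positive
multiples of its centre values, so at a zero `p` of `ψ` the positive part is controlled by the
negative part, and between the radii `h` and `2 h` about `p` the negative part also grows by at most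
`exp (C ω R)`.

*Many negative balls.* Split the range from `h` to `2 h` into `J ≈ ω R` shells. Across at least half
of them the negative part grows by a bounded factor, and each such shell carries a ball of radius
about `h / J` on which `ψ < 0`.

*Comparison.* Suppose that `ψ > 0` on the nodal domain `Ω` and that every point of `Ω` has a zero of
`ψ` within distance `h`; let `x₀ ∈ Ω` be an almost maximum point and `p` such a zero near `x₀`. The
Newtonian potential `P` of unit charges at the centres of the negative balls is harmonic in `Ω`,
with `P x₀ ≳ J h ^ (2 - n)` and `P ≲ (J / h) ^ (n - 2) log J` on `Ω`. If `P x₀` exceeded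
`C (ω h) ^ 2 sup P`, then `ψ` plus a suitable multiple of `P` would violate the maximum principle
near `x₀`. Hence `J ^ (3 - n) / log J ≲ (ω h) ^ 2`. Bounding `log J` by a multiple of `J ^ (2 / n)`
makes the left-hand side at least a constant times `J ^ (-(n - 1) (n - 2) / n)`, and the square root
of this power is the `λ ^ (-ε')` of the theorem.
-/

open InnerProductSpace Laplacian Module Topology
open scoped RealInnerProductSpace

section Laplacian

variable {V F : Type*} [NormedAddCommGroup V] [InnerProductSpace ℝ V]
  [NormedAddCommGroup F] [NormedSpace ℝ F]

lemma hasDerivAt_add_smul (x e : V) (t : ℝ) : HasDerivAt (fun s : ℝ => x + s • e) e t := by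
  simpa using ((hasDerivAt_id t).smul_const e).const_add x

lemma iteratedFDeriv_two_eq_deriv_deriv {f : V → F} {x : V} (hf : ContDiffAt ℝ 2 f x) (e : V) :
    iteratedFDeriv ℝ 2 f x ![e, e] = deriv (deriv fun t : ℝ => f (x + t • e)) 0 := by
  have hline : Tendsto (fun t : ℝ => x + t • e) (𝓝 0) (𝓝 x) := by
    simpa using (hasDerivAt_add_smul x e 0).continuousAt.tendsto
  have hfirst : deriv (fun t : ℝ => f (x + t • e)) =ᶠ[𝓝 0] fun t => fderiv ℝ f (x + t • e) e := by
    filter_upwards [hline.eventually (hf.eventually (by simp))] with t ht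
    exact ((ht.differentiableAt two_ne_zero).hasFDerivAt.comp_hasDerivAt t
      (hasDerivAt_add_smul x e t)).deriv
  have hfderiv : HasFDerivAt (fderiv ℝ f) (fderiv ℝ (fderiv ℝ f) x) (x + (0 : ℝ) • e) := by
    rw [zero_smul, add_zero]
    exact ((hf.fderiv_right (m := 1) one_add_one_eq_two.le).differentiableAt
      one_ne_zero).hasFDerivAt
  have hsecond : HasDerivAt (fun t : ℝ => fderiv ℝ f (x + t • e) e)
      (fderiv ℝ (fderiv ℝ f) x e e) 0 := by
    exact (ContinuousLinearMap.apply ℝ F e).hasFDerivAt.comp_hasDerivAt (0 : ℝ)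
      (hfderiv.comp_hasDerivAt (0 : ℝ) (hasDerivAt_add_smul x e 0))
  rw [hfirst.deriv_eq, hsecond.deriv, iteratedFDeriv_two_apply]
  rfl

lemma hasDerivAt_norm_add_smul_sub_sq (x y e : V) (t : ℝ) :
    HasDerivAt (fun s : ℝ => ‖x + s • e - y‖ ^ 2) (2 * ⟪x + t • e - y, e⟫) t := by
  simpa using ((hasDerivAt_add_smul x e t).sub_const y).norm_sq

lemma contDiff_norm_sub_sq {m : WithTop ℕ∞} (y : V) : ContDiff ℝ m fun z : V => ‖z - y‖ ^ 2 :=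
  (contDiff_id.sub contDiff_const).norm_sq ℝ

variable [FiniteDimensional ℝ V]

lemma laplacian_eq_sum_deriv_deriv {ι : Type*} [Fintype ι] {f : V → F} {x : V}
    (hf : ContDiffAt ℝ 2 f x) (b : OrthonormalBasis ι ℝ V) :
    Δ f x = ∑ i, deriv (deriv fun t : ℝ => f (x + t • b i)) 0 := by
  simp only [laplacian_eq_iteratedFDeriv_orthonormalBasis f b,
    iteratedFDeriv_two_eq_deriv_deriv hf]

lemma deriv_deriv_nonpos_of_isLocalMax {f : ℝ → ℝ} {a : ℝ} (hc : ContinuousAt f a)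
    (h : IsLocalMax f a) : deriv (deriv f) a ≤ 0 := by
  by_contra! hpos
  have hconst : f =ᶠ[𝓝 a] fun _ => f a := by
    filter_upwards [h, isLocalMin_of_deriv_deriv_pos hpos h.deriv_eq_zero hc] with t hmax hmin
    exact le_antisymm hmax hmin
  simp [hconst.deriv.deriv_eq] at hpos

lemma laplacian_nonpos_of_isLocalMax {f : V → ℝ} {x : V} (hf : ContDiffAt ℝ 2 f x)
    (h : IsLocalMax f x) : Δ f x ≤ 0 := by
  rw [laplacian_eq_sum_deriv_deriv hf (stdOrthonormalBasis ℝ V)]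
  refine Finset.sum_nonpos fun i _ => ?_
  set e := stdOrthonormalBasis ℝ V i
  have hline : Tendsto (fun t : ℝ => x + t • e) (𝓝 0) (𝓝 (x + (0 : ℝ) • e)) :=
    (hasDerivAt_add_smul x e 0).continuousAt.tendsto
  have hx : x + (0 : ℝ) • e = x := by simp
  refine deriv_deriv_nonpos_of_isLocalMax ?_ ?_
  · exact ContinuousAt.comp (g := f) (hx.symm ▸ hf.continuousAt) hline
  · simpa [IsLocalMax, IsMaxFilter, hx] using (hx ▸ hline).eventually h

lemma laplacian_finset_sum {ι : Type*} {s : Finset ι} {f : ι → V → F} {x : V}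
    (hf : ∀ i ∈ s, ContDiffAt ℝ 2 (f i) x) :
    Δ (fun y => ∑ i ∈ s, f i y) x = ∑ i ∈ s, Δ (f i) x := by
  classical
  induction s using Finset.induction_on with
  | empty => simp [laplacian_const]
  | insert a s ha ih =>
    rw [Finset.forall_mem_insert] at hf
    simp only [Finset.sum_insert ha]
    rw [← ih hf.2, ← hf.1.laplacian_add (ContDiffAt.sum hf.2)]
    rfl

lemma laplacian_comp_norm_sub_sq {g : ℝ → ℝ} {x y : V} (hg : ContDiffAt ℝ 2 g (‖x - y‖ ^ 2)) :
    Δ (fun z => g (‖z - y‖ ^ 2)) x =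
      2 * finrank ℝ V * deriv g (‖x - y‖ ^ 2) +
        4 * ‖x - y‖ ^ 2 * deriv (deriv g) (‖x - y‖ ^ 2) := by
  set b := stdOrthonormalBasis ℝ V
  have hsecond (i) : deriv (deriv fun t : ℝ => g (‖x + t • b i - y‖ ^ 2)) 0 =
      2 * deriv g (‖x - y‖ ^ 2) + 4 * ⟪b i, x - y⟫ ^ 2 * deriv (deriv g) (‖x - y‖ ^ 2) := by
    have hsq := hasDerivAt_norm_add_smul_sub_sq x y (b i)
    have hzero : ‖x + (0 : ℝ) • b i - y‖ ^ 2 = ‖x - y‖ ^ 2 := by simp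
    have hfirst : deriv (fun t : ℝ => g (‖x + t • b i - y‖ ^ 2)) =ᶠ[𝓝 0]
        fun t => deriv g (‖x + t • b i - y‖ ^ 2) * (2 * ⟪x + t • b i - y, b i⟫) := by
      filter_upwards [(hzero ▸ (hsq 0).continuousAt.tendsto).eventually (hg.eventually (by simp))]
        with t ht
      exact ((ht.differentiableAt two_ne_zero).hasDerivAt.comp t (hsq t)).deriv
    have hderiv : HasDerivAt (deriv g) (deriv (deriv g) (‖x - y‖ ^ 2))
        (‖x + (0 : ℝ) • b i - y‖ ^ 2) := by
      rw [hzero]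
      exact ((hg.derivWithin one_add_one_eq_two.le).differentiableAt one_ne_zero).hasDerivAt
    have hinner : HasDerivAt (fun t : ℝ => 2 * ⟪x + t • b i - y, b i⟫) 2 0 := by
      simpa using (((hasDerivAt_add_smul x (b i) 0).sub_const y).inner ℝ
        (hasDerivAt_const 0 (b i))).const_mul 2
    have hcomp : HasDerivAt (fun t : ℝ => deriv g (‖x + t • b i - y‖ ^ 2)) _ 0 :=
      HasDerivAt.comp (h := fun t : ℝ => ‖x + t • b i - y‖ ^ 2) 0 hderiv (hsq 0)
    rw [hfirst.deriv_eq, (hcomp.fun_mul hinner).deriv]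
    simp only [zero_smul, add_zero, real_inner_comm (b i)]
    ring
  have hcomp : ContDiffAt ℝ 2 (fun z => g (‖z - y‖ ^ 2)) x :=
    hg.comp x (contDiff_norm_sub_sq y).contDiffAt
  rw [laplacian_eq_sum_deriv_deriv hcomp b]
  simp only [hsecond, Finset.sum_add_distrib, ← Finset.sum_mul, ← Finset.mul_sum,
    b.sum_sq_inner_right, Finset.sum_const, Finset.card_univ, Fintype.card_fin, nsmul_eq_mul]
  ring

lemma laplacian_norm_sub_sq (x y : V) : Δ (fun z => ‖z - y‖ ^ 2) x = 2 * finrank ℝ V := by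
  simpa using laplacian_comp_norm_sub_sq (g := id) (x := x) (y := y) contDiffAt_id

/-- The fundamental solution `‖x - y‖ ^ (2 - dim V)` of the Laplacian with pole `y`, up to a
constant factor. -/
def greenKernel (y x : V) : ℝ := (‖x - y‖ ^ 2) ^ ((2 - finrank ℝ V : ℝ) / 2)

omit [FiniteDimensional ℝ V] in
lemma contDiffAt_greenKernel {x y : V} (h : x ≠ y) : ContDiffAt ℝ 2 (greenKernel y) x := by
  have : ‖x - y‖ ^ 2 ≠ 0 := by simpa [sub_eq_zero] using h
  exact (contDiff_norm_sub_sq y).contDiffAt.rpow_const_of_ne this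

lemma laplacian_greenKernel {x y : V} (h : x ≠ y) : Δ (greenKernel y) x = 0 := by
  have hu : 0 < ‖x - y‖ ^ 2 := by have := norm_pos_iff.2 (sub_ne_zero.2 h); positivity
  set s : ℝ := (2 - finrank ℝ V) / 2 with hs
  have hfirst : deriv (fun u : ℝ => u ^ s) = fun u => s * u ^ (s - 1) := Real.deriv_rpow_const' _
  have hsecond : deriv (fun u : ℝ => s * u ^ (s - 1)) (‖x - y‖ ^ 2) =
      s * ((s - 1) * (‖x - y‖ ^ 2) ^ (s - 2)) := by
    rw [((Real.hasDerivAt_rpow_const (Or.inl hu.ne')).const_mul s).deriv]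
    ring_nf
  have hpow : (‖x - y‖ ^ 2) ^ (s - 1) = (‖x - y‖ ^ 2) ^ (s - 2) * ‖x - y‖ ^ 2 := by
    rw [← Real.rpow_add_one hu.ne']; ring_nf
  have hn : (finrank ℝ V : ℝ) = 2 - 2 * s := by rw [hs]; ring
  have := laplacian_comp_norm_sub_sq (g := fun u => u ^ s) (x := x) (y := y)
    (Real.contDiffAt_rpow_const_of_ne hu.ne')
  simp only [hfirst, hsecond, hpow, hn] at this
  exact this.trans (by ring)

end Laplacian

section ExponentialSums

variable {V : Type*} [NormedAddCommGroup V] [InnerProductSpace ℝ V]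

/-- `ψ` is a finite sum of plane waves `c i * exp (i ⟪ξ i, x⟫)` whose frequencies `ξ i` all lie on
the sphere of radius `ω` about the origin. Periodic eigenfunctions with eigenvalue `ω ^ 2` enter
the argument only through this property. -/
def IsSphericalExpSum (ω : ℝ) (ψ : V → ℝ) : Prop :=
  ∃ (ι : Type) (_ : Fintype ι) (c : ι → ℂ) (ξ : ι → V), (∀ i, ‖ξ i‖ = ω) ∧
    ∀ x, (ψ x : ℂ) = ∑ i, c i * Complex.exp (Complex.I * (⟪ξ i, x⟫ : ℝ))

end ExponentialSums

section Fourier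

open UnitAddTorus

local instance : MeasureSpace UnitAddCircle := ⟨AddCircle.haarAddCircle⟩

local instance : Measure.IsAddHaarMeasure (volume : Measure UnitAddCircle) :=
  inferInstanceAs (Measure.IsAddHaarMeasure AddCircle.haarAddCircle)

local instance : IsProbabilityMeasure (volume : Measure UnitAddCircle) :=
  inferInstanceAs (IsProbabilityMeasure AddCircle.haarAddCircle)

variable {n : ℕ} {φ ψ : EuclideanSpace ℝ (Fin n) → ℝ}

/-- The projection `ℝⁿ → ℝⁿ/ℤⁿ`. -/
def torusMk (x : EuclideanSpace ℝ (Fin n)) : UnitAddTorus (Fin n) :=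
  fun i => (x i : UnitAddCircle)

lemma torusMk_surjective : Function.Surjective (torusMk (n := n)) := fun z => by
  choose f hf using fun i => QuotientAddGroup.mk_surjective (z i)
  exact ⟨WithLp.toLp 2 f, funext hf⟩

lemma torusMk_add (x y : EuclideanSpace ℝ (Fin n)) : torusMk (x + y) = torusMk x + torusMk y :=
  rfl

lemma isOpenQuotientMap_torusMk : IsOpenQuotientMap (torusMk (n := n)) :=
  (IsOpenQuotientMap.piMap fun _ => QuotientAddGroup.isOpenQuotientMap_mk).comp
    (PiLp.homeomorph 2 fun _ : Fin n => ℝ).isOpenQuotientMap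

/-- The function on the torus `ℝⁿ/ℤⁿ` induced by `φ`, defined through the representatives in
`[0,1)ⁿ`; it is complex-valued because Mathlib's Fourier series are. -/
def torusLift (φ : EuclideanSpace ℝ (Fin n) → ℝ) (z : UnitAddTorus (Fin n)) : ℂ :=
  φ (WithLp.toLp 2 fun i => (AddCircle.equivIco (1 : ℝ) 0 (z i) : ℝ))

lemma ZnPeriodic.torusLift_torusMk (h : ZnPeriodic n φ) (x : EuclideanSpace ℝ (Fin n)) :
    torusLift φ (torusMk x) = φ x := by
  rw [torusLift, ← h x (fun i => -⌊x i⌋)]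
  congr 3 with i
  rw [torusMk, AddCircle.coe_equivIco_mk_apply]
  simp [← Int.self_sub_floor, sub_eq_add_neg]

lemma ZnPeriodic.continuous_torusLift (h : ZnPeriodic n φ) (hc : Continuous φ) :
    Continuous (torusLift φ) := by
  rw [isOpenQuotientMap_torusMk.isQuotientMap.continuous_iff]
  exact (Complex.continuous_ofReal.comp hc).congr fun x => (h.torusLift_torusMk x).symm

lemma ZnPeriodic.fderiv_apply (h : ZnPeriodic n φ) (e : EuclideanSpace ℝ (Fin n)) :
    ZnPeriodic n (fun y => fderiv ℝ φ y e) := by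
  intro x v
  have hadd (y : EuclideanSpace ℝ (Fin n)) :
      φ (y + WithLp.toLp 2 (fun i => (v i : ℝ))) = φ y := h y v
  change fderiv ℝ φ (x + WithLp.toLp 2 (fun i => (v i : ℝ))) e = _
  rw [← fderiv_comp_add_right, funext hadd]

/-- The frequency `2πk` of the Fourier monomial of index `k`. -/
def latticeFrequency (k : Fin n → ℤ) : EuclideanSpace ℝ (Fin n) :=
  WithLp.toLp 2 fun i => 2 * π * k i

lemma mFourier_torusMk (k : Fin n → ℤ) (x : EuclideanSpace ℝ (Fin n)) :
    mFourier k (torusMk x) = Complex.exp (Complex.I * (⟪latticeFrequency k, x⟫ : ℝ)) := by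
  simp only [mFourier, torusMk, ContinuousMap.coe_mk, fourier_coe_apply, ← Complex.exp_sum,
    latticeFrequency, PiLp.inner_apply, RCLike.inner_apply, conj_trivial, Complex.ofReal_sum,
    Finset.mul_sum]
  congr 1
  refine Finset.sum_congr rfl fun i _ => ?_
  push_cast
  ring

lemma finite_setOf_norm_latticeFrequency_le (r : ℝ) :
    {k : Fin n → ℤ | ‖latticeFrequency k‖ ≤ r}.Finite := by
  refine ((isCompact_closedBall (0 : Fin n → ℤ) |r|).finite_of_discrete).subset fun k hk => ?_
  rw [mem_closedBall_zero_iff, pi_norm_le_iff_of_nonneg (abs_nonneg r)]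
  intro i
  calc ‖k i‖ ≤ 2 * π * ‖k i‖ := le_mul_of_one_le_left (norm_nonneg _) (by linarith [pi_gt_three])
    _ = ‖latticeFrequency k i‖ := by
      simp [latticeFrequency, abs_of_pos pi_pos, Int.norm_eq_abs]
    _ ≤ ‖latticeFrequency k‖ := PiLp.norm_apply_le _ i
    _ ≤ |r| := hk.trans (le_abs_self r)

lemma one_le_norm_latticeFrequency {k : Fin n → ℤ} (hk : k ≠ 0) : 1 ≤ ‖latticeFrequency k‖ := by
  obtain ⟨i, hi⟩ := Function.ne_iff.1 hk
  calc (1 : ℝ) ≤ |(k i : ℝ)| := mod_cast Int.one_le_abs hi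
    _ ≤ 2 * π * |(k i : ℝ)| := le_mul_of_one_le_left (abs_nonneg _) (by linarith [pi_gt_three])
    _ = ‖latticeFrequency k i‖ := by simp [latticeFrequency, abs_of_pos pi_pos]
    _ ≤ ‖latticeFrequency k‖ := PiLp.norm_apply_le _ i

lemma integral_mFourier_smul_add (f : UnitAddTorus (Fin n) → ℂ) (k : Fin n → ℤ)
    (e : EuclideanSpace ℝ (Fin n)) :
    ∫ z, mFourier (-k) z • f (z + torusMk e) =
      Complex.exp (Complex.I * (⟪latticeFrequency k, e⟫ : ℝ)) * mFourierCoeff f k := by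
  have hcharacter (z : UnitAddTorus (Fin n)) : mFourier (-k) z =
      Complex.exp (Complex.I * (⟪latticeFrequency k, e⟫ : ℝ)) * mFourier (-k) (z + torusMk e) := by
    obtain ⟨x, rfl⟩ := torusMk_surjective z
    have hneg : latticeFrequency (-k) = -latticeFrequency k := by
      ext i; simp [latticeFrequency]
    rw [← torusMk_add, mFourier_torusMk, mFourier_torusMk, ← Complex.exp_add, hneg,
      inner_add_right, inner_neg_left, inner_neg_left]
    push_cast
    ring_nf
  rw [mFourierCoeff, ← integral_const_mul, ← integral_add_right_eq_self
    (fun z => Complex.exp (Complex.I * (⟪latticeFrequency k, e⟫ : ℝ)) * (mFourier (-k) z • f z))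
    (torusMk e)]
  congr 1 with z
  rw [hcharacter z, smul_eq_mul, smul_eq_mul, mul_assoc]

lemma ZnPeriodic.hasDerivAt_integral_mFourier_smul (h : ZnPeriodic n φ) (hc : ContDiff ℝ 1 φ)
    (k : Fin n → ℤ) (e : EuclideanSpace ℝ (Fin n)) :
    HasDerivAt (fun t : ℝ => ∫ z, mFourier (-k) z • torusLift φ (z + torusMk (t • e)))
      (mFourierCoeff (torusLift fun y => fderiv ℝ φ y e) k) 0 := by
  have hlift := h.continuous_torusLift hc.continuous
  have hlift' := (h.fderiv_apply e).continuous_torusLift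
    ((hc.continuous_fderiv one_ne_zero).clm_apply continuous_const)
  obtain ⟨C, hC⟩ := isCompact_univ.exists_bound_of_continuousOn hlift'.continuousOn
  have hcharacter : Continuous fun z : UnitAddTorus (Fin n) => mFourier (-k) z :=
    (mFourier (-k)).continuous
  have hderiv := (hasDerivAt_integral_of_dominated_loc_of_deriv_le (μ := volume) (x₀ := (0 : ℝ))
    (F := fun t z => mFourier (-k) z • torusLift φ (z + torusMk (t • e)))
    (F' := fun t z => mFourier (-k) z • torusLift (fun y => fderiv ℝ φ y e) (z + torusMk (t • e)))
    (bound := fun _ => C) univ_mem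
    (Eventually.of_forall fun t => Continuous.aestronglyMeasurable (by fun_prop))
    (Continuous.integrable_of_hasCompactSupport (by fun_prop) (.of_compactSpace _))
    (Continuous.aestronglyMeasurable (by fun_prop))
    (Eventually.of_forall fun z t _ => ?_) (integrable_const C)
    (Eventually.of_forall fun z t _ => ?_)).2
  · simpa [mFourierCoeff, show torusMk (0 : EuclideanSpace ℝ (Fin n)) = 0 from rfl] using hderiv
  · have hle : ‖mFourier (-k) z‖ ≤ 1 :=
      ((mFourier (-k)).norm_coe_le_norm z).trans_eq mFourier_norm
    rw [norm_smul]
    exact (mul_le_of_le_one_left (norm_nonneg _) hle).trans (hC _ (Set.mem_univ _))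
  · obtain ⟨x, rfl⟩ := torusMk_surjective z
    simp only [← torusMk_add, h.torusLift_torusMk, (h.fderiv_apply e).torusLift_torusMk]
    exact ((((hc.differentiable one_ne_zero).differentiableAt.hasFDerivAt).comp_hasDerivAt t
      (hasDerivAt_add_smul x e t)).ofReal_comp).fun_const_smul _

lemma ZnPeriodic.mFourierCoeff_fderiv (h : ZnPeriodic n φ) (hc : ContDiff ℝ 1 φ)
    (k : Fin n → ℤ) (e : EuclideanSpace ℝ (Fin n)) :
    mFourierCoeff (torusLift fun y => fderiv ℝ φ y e) k =
      Complex.I * (⟪latticeFrequency k, e⟫ : ℝ) * mFourierCoeff (torusLift φ) k := by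
  have hexp : HasDerivAt (fun t : ℝ => Complex.exp (Complex.I * (⟪latticeFrequency k, t • e⟫ : ℝ)) *
      mFourierCoeff (torusLift φ) k)
      (Complex.I * (⟪latticeFrequency k, e⟫ : ℝ) * mFourierCoeff (torusLift φ) k) 0 := by
    have hphase : HasDerivAt (fun t : ℝ => Complex.I * (⟪latticeFrequency k, t • e⟫ : ℝ))
        (Complex.I * (⟪latticeFrequency k, e⟫ : ℝ)) 0 := by
      simpa [inner_smul_right] using
        (((hasDerivAt_id (0 : ℝ)).mul_const ⟪latticeFrequency k, e⟫).ofReal_comp).const_mul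
          Complex.I
    simpa using hphase.cexp.mul_const (mFourierCoeff (torusLift φ) k)
  refine (h.hasDerivAt_integral_mFourier_smul hc k e).unique ?_
  simpa only [integral_mFourier_smul_add] using hexp

lemma ZnPeriodic.mFourierCoeff_lap (h : ZnPeriodic n ψ) (hc : ContDiff ℝ 2 ψ) (k : Fin n → ℤ) :
    mFourierCoeff (torusLift (lap n ψ)) k =
      -(‖latticeFrequency k‖ : ℂ) ^ 2 * mFourierCoeff (torusLift ψ) k := by
  set e : Fin n → EuclideanSpace ℝ (Fin n) := fun i => EuclideanSpace.single i 1
  have hd (i : Fin n) : ContDiff ℝ 1 fun y => fderiv ℝ ψ y (e i) :=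
    (hc.fderiv_right (m := 1) (by norm_num)).clm_apply contDiff_const
  have hsecond (i : Fin n) :
      mFourierCoeff (torusLift fun x => fderiv ℝ (fun y => fderiv ℝ ψ y (e i)) x (e i)) k =
        -((latticeFrequency k i : ℝ) : ℂ) ^ 2 * mFourierCoeff (torusLift ψ) k := by
    rw [(h.fderiv_apply _).mFourierCoeff_fderiv (hd i),
      h.mFourierCoeff_fderiv (hc.of_le one_le_two)]
    have : ⟪latticeFrequency k, e i⟫ = latticeFrequency k i := by
      simp [e, EuclideanSpace.inner_single_right]
    rw [this]
    linear_combination (((latticeFrequency k i : ℝ) : ℂ) ^ 2 * mFourierCoeff (torusLift ψ) k) *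
      Complex.I_sq
  have hint (i : Fin n) : Integrable fun z : UnitAddTorus (Fin n) => mFourier (-k) z •
      torusLift (fun x => fderiv ℝ (fun y => fderiv ℝ ψ y (e i)) x (e i)) z := by
    have := ((h.fderiv_apply (e i)).fderiv_apply (e i)).continuous_torusLift
      (((hd i).continuous_fderiv one_ne_zero).clm_apply continuous_const)
    exact Continuous.integrable_of_hasCompactSupport
      ((mFourier (-k)).continuous.smul this) (.of_compactSpace _)
  have hsum : mFourierCoeff (torusLift (lap n ψ)) k = ∑ i,
      mFourierCoeff (torusLift fun x => fderiv ℝ (fun y => fderiv ℝ ψ y (e i)) x (e i)) k := by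
    simp_rw [mFourierCoeff]
    rw [← integral_finsetSum _ fun i _ => hint i]
    simp [torusLift, lap, e, Finset.mul_sum]
  rw [hsum, Finset.sum_congr rfl fun i _ => hsecond i, ← Finset.sum_mul, Finset.sum_neg_distrib,
    ← Complex.ofReal_pow, EuclideanSpace.real_norm_sq_eq]
  push_cast
  rfl

lemma ZnPeriodic.mFourierCoeff_eq_zero_of_lap_eq {lam : ℝ} (h : ZnPeriodic n ψ)
    (hc : ContDiff ℝ 2 ψ) (hl : ∀ x, lap n ψ x = -lam * ψ x) {k : Fin n → ℤ}
    (hk : ‖latticeFrequency k‖ ^ 2 ≠ lam) : mFourierCoeff (torusLift ψ) k = 0 := by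
  have hcoeff := h.mFourierCoeff_lap hc k
  have hlam : mFourierCoeff (torusLift (lap n ψ)) k =
      -(lam : ℂ) * mFourierCoeff (torusLift ψ) k := by
    rw [mFourierCoeff, mFourierCoeff, ← integral_const_mul]
    congr 1 with z
    simp only [torusLift, hl, smul_eq_mul]
    push_cast
    ring
  have hne : (‖latticeFrequency k‖ : ℂ) ^ 2 - lam ≠ 0 := mod_cast sub_ne_zero.2 hk
  refine (mul_eq_zero.1 ?_).resolve_left hne
  linear_combination hcoeff - hlam

lemma ZnPeriodic.eq_sum_mFourierCoeff (h : ZnPeriodic n ψ) (hc : Continuous ψ)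
    {S : Finset (Fin n → ℤ)} (hS : ∀ k ∉ S, mFourierCoeff (torusLift ψ) k = 0)
    (x : EuclideanSpace ℝ (Fin n)) :
    (ψ x : ℂ) = ∑ k ∈ S, mFourierCoeff (torusLift ψ) k *
      Complex.exp (Complex.I * (⟪latticeFrequency k, x⟫ : ℝ)) := by
  let f : C(UnitAddTorus (Fin n), ℂ) := ⟨torusLift ψ, h.continuous_torusLift hc⟩
  have hseries : HasSum (fun k => mFourierCoeff f k • mFourier k (torusMk x)) (f (torusMk x)) :=
    hasSum_mFourier_series_apply_of_summable (summable_of_ne_finset_zero hS) (torusMk x)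
  have hfinite : HasSum (fun k => mFourierCoeff f k • mFourier k (torusMk x))
      (∑ k ∈ S, mFourierCoeff f k • mFourier k (torusMk x)) :=
    hasSum_sum_of_ne_finset_zero fun k hk => by
      rw [show mFourierCoeff f k = 0 from hS k hk, zero_smul]
  calc (ψ x : ℂ) = f (torusMk x) := (h.torusLift_torusMk x).symm
    _ = _ := hseries.unique hfinite
    _ = _ := Finset.sum_congr rfl fun k _ => by rw [mFourier_torusMk, smul_eq_mul]; rfl

theorem ZnPeriodic.isSphericalExpSum_of_lap_eq {lam : ℝ} (h : ZnPeriodic n ψ)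
    (hc : ContDiff ℝ 2 ψ) (hl : ∀ x, lap n ψ x = -lam * ψ x) : IsSphericalExpSum √lam ψ := by
  have hfin : {k : Fin n → ℤ | ‖latticeFrequency k‖ ^ 2 = lam}.Finite :=
    (finite_setOf_norm_latticeFrequency_le √lam).subset fun k hk => Real.le_sqrt_of_sq_le hk.le
  refine ⟨hfin.toFinset, inferInstance, fun k => mFourierCoeff (torusLift ψ) k,
    fun k => latticeFrequency k, fun k => ?_, fun x => ?_⟩
  · exact (Real.sqrt_sq (norm_nonneg _)).symm.trans (congrArg _ (hfin.mem_toFinset.1 k.2))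
  · rw [Finset.sum_coe_sort hfin.toFinset fun k => mFourierCoeff (torusLift ψ) k *
      Complex.exp (Complex.I * (⟪latticeFrequency k, x⟫ : ℝ))]
    refine h.eq_sum_mFourierCoeff hc.continuous (fun k hk => ?_) x
    exact h.mFourierCoeff_eq_zero_of_lap_eq hc hl (by simpa using hk)

theorem ZnPeriodic.one_le_of_lap_eq {lam : ℝ} (h : ZnPeriodic n ψ) (hc : ContDiff ℝ 2 ψ)
    (hl : ∀ x, lap n ψ x = -lam * ψ x) (hlam : lam ≠ 0) {x : EuclideanSpace ℝ (Fin n)}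
    (hx : ψ x ≠ 0) : 1 ≤ lam := by
  obtain ⟨k, hk⟩ : ∃ k, mFourierCoeff (torusLift ψ) k ≠ 0 := by
    by_contra! hzero
    have := h.eq_sum_mFourierCoeff hc.continuous (S := ∅) (fun k _ => hzero k) x
    exact hx (by simpa using this)
  have hnorm : ‖latticeFrequency k‖ ^ 2 = lam :=
    not_imp_comm.1 (h.mFourierCoeff_eq_zero_of_lap_eq hc hl) hk
  have hk0 : k ≠ 0 := by
    rintro rfl
    have hzero : latticeFrequency (0 : Fin n → ℤ) = 0 := by
      ext i; simp [latticeFrequency]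
    simp [← hnorm, hzero] at hlam
  rw [← hnorm]
  exact one_le_pow₀ (one_le_norm_latticeFrequency hk0)

end Fourier

section PlaneWaves

variable {V : Type*} [NormedAddCommGroup V] [InnerProductSpace ℝ V] {ω : ℝ} {ψ : V → ℝ}

lemma contDiff_cexp_I_mul_inner {m : WithTop ℕ∞} (ξ : V) :
    ContDiff ℝ m fun x : V => Complex.exp (Complex.I * (⟪ξ, x⟫ : ℝ)) :=
  Complex.contDiff_exp.comp
    (contDiff_const.mul (Complex.ofRealCLM.contDiff.comp (contDiff_const.inner ℝ contDiff_id)))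

lemma hasDerivAt_cexp_I_mul_inner (ξ x e : V) (t : ℝ) :
    HasDerivAt (fun s : ℝ => Complex.exp (Complex.I * (⟪ξ, x + s • e⟫ : ℝ)))
      (Complex.I * (⟪ξ, e⟫ : ℝ) * Complex.exp (Complex.I * (⟪ξ, x + t • e⟫ : ℝ))) t := by
  have hinner : HasDerivAt (fun s : ℝ => ⟪ξ, x + s • e⟫) ⟪ξ, e⟫ t := by
    simpa using (hasDerivAt_const t ξ).inner ℝ (hasDerivAt_add_smul x e t)
  exact (hinner.ofReal_comp.const_mul Complex.I).cexp.congr_deriv (mul_comm _ _)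

lemma laplacian_cexp_I_mul_inner [FiniteDimensional ℝ V] (ξ x : V) :
    Δ (fun y => Complex.exp (Complex.I * (⟪ξ, y⟫ : ℝ))) x =
      -(‖ξ‖ ^ 2 : ℝ) * Complex.exp (Complex.I * (⟪ξ, x⟫ : ℝ)) := by
  have hsecond (e : V) : deriv (deriv fun t : ℝ => Complex.exp (Complex.I * (⟪ξ, x + t • e⟫ : ℝ))) 0
      = (⟪ξ, e⟫ ^ 2 : ℝ) * -Complex.exp (Complex.I * (⟪ξ, x⟫ : ℝ)) := by
    have hfirst : (deriv fun t : ℝ => Complex.exp (Complex.I * (⟪ξ, x + t • e⟫ : ℝ))) = fun t : ℝ =>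
        Complex.I * (⟪ξ, e⟫ : ℝ) * Complex.exp (Complex.I * (⟪ξ, x + t • e⟫ : ℝ)) :=
      funext fun t => (hasDerivAt_cexp_I_mul_inner ξ x e t).deriv
    rw [hfirst, ((hasDerivAt_cexp_I_mul_inner ξ x e 0).const_mul _).deriv]
    rw [zero_smul, add_zero, Complex.ofReal_pow]
    linear_combination ((⟪ξ, e⟫ : ℝ) : ℂ) ^ 2 *
      Complex.exp (Complex.I * (⟪ξ, x⟫ : ℝ)) * Complex.I_sq
  rw [laplacian_eq_sum_deriv_deriv (contDiff_cexp_I_mul_inner ξ).contDiffAt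
    (stdOrthonormalBasis ℝ V)]
  simp only [hsecond, ← Finset.sum_mul, ← Complex.ofReal_sum,
    (stdOrthonormalBasis ℝ V).sum_sq_inner_left]
  ring

lemma IsSphericalExpSum.contDiff {m : WithTop ℕ∞} (h : IsSphericalExpSum ω ψ) :
    ContDiff ℝ m ψ := by
  obtain ⟨ι, hι, c, ξ, -, hψ⟩ := h
  have hre : ψ = fun x => (∑ i, c i * Complex.exp (Complex.I * (⟪ξ i, x⟫ : ℝ))).re := by
    simp [← hψ]
  rw [hre]
  exact Complex.reCLM.contDiff.comp
    (ContDiff.sum fun i _ => contDiff_const.mul (contDiff_cexp_I_mul_inner (ξ i)))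

lemma IsSphericalExpSum.continuous (h : IsSphericalExpSum ω ψ) : Continuous ψ :=
  (h.contDiff (m := 0)).continuous

lemma IsSphericalExpSum.neg (h : IsSphericalExpSum ω ψ) : IsSphericalExpSum ω fun x => -ψ x := by
  obtain ⟨ι, hι, c, ξ, hξ, hψ⟩ := h
  exact ⟨ι, hι, -c, ξ, hξ, by simp [hψ]⟩

lemma IsSphericalExpSum.comp_add_left (h : IsSphericalExpSum ω ψ) (p : V) :
    IsSphericalExpSum ω fun x => ψ (p + x) := by
  obtain ⟨ι, hι, c, ξ, hξ, hψ⟩ := h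
  refine ⟨ι, hι, fun i => c i * Complex.exp (Complex.I * (⟪ξ i, p⟫ : ℝ)), ξ, hξ, fun x => ?_⟩
  simp only [hψ, inner_add_right, Complex.ofReal_add, mul_add, Complex.exp_add, mul_assoc]

lemma IsSphericalExpSum.laplacian [FiniteDimensional ℝ V] (h : IsSphericalExpSum ω ψ) (x : V) :
    Δ ψ x = -ω ^ 2 * ψ x := by
  have hcast : Δ (fun y => (ψ y : ℂ)) x = (Δ ψ x : ℂ) :=
    (h.contDiff (m := 2)).contDiffAt.laplacian_CLM_comp_left (l := Complex.ofRealCLM)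
  obtain ⟨ι, hι, c, ξ, hξ, hψ⟩ := h
  have hsmul (i : ι) : Δ (fun y => c i * Complex.exp (Complex.I * (⟪ξ i, y⟫ : ℝ))) x =
      c i * (-(ω ^ 2 : ℝ) * Complex.exp (Complex.I * (⟪ξ i, x⟫ : ℝ))) := by
    rw [← hξ i, ← laplacian_cexp_I_mul_inner]
    exact (contDiff_cexp_I_mul_inner (ξ i)).contDiffAt.laplacian_CLM_comp_left
      (l := ContinuousLinearMap.mul ℝ ℂ (c i))
  have hsum : Δ (fun y => (ψ y : ℂ)) x = -(ω ^ 2 : ℝ) * (ψ x : ℂ) := by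
    simp only [hψ]
    rw [laplacian_finset_sum fun i _ =>
      (contDiff_const.mul (contDiff_cexp_I_mul_inner (ξ i))).contDiffAt, Finset.mul_sum]
    exact Finset.sum_congr rfl fun i _ => (hsmul i).trans (by ring)
  exact_mod_cast hcast.symm.trans hsum

end PlaneWaves

section MeanValue

variable {V : Type*} [NormedAddCommGroup V] [InnerProductSpace ℝ V] [FiniteDimensional ℝ V]
  [MeasurableSpace V] [BorelSpace V]

lemma integrableOn_ball_of_continuous {F : Type*} [NormedAddCommGroup F] {f : V → F}
    (hf : Continuous f) (x : V) (r : ℝ) : IntegrableOn f (ball x r) :=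
  (hf.continuousOn.integrableOn_compact (isCompact_closedBall x r)).mono_set ball_subset_closedBall

lemma setIntegral_ball_eq {F : Type*} [NormedAddCommGroup F] [NormedSpace ℝ F] (f : V → F)
    (x : V) (r : ℝ) : ∫ y in ball x r, f y = ∫ y in ball (0 : V) r, f (x + y) := by
  have := (measurePreserving_add_left (volume : Measure V) x).setIntegral_preimage_emb
    (measurableEmbedding_addLeft x) f (ball x r)
  simpa using this.symm

lemma setIntegral_ball_cexp_eq_of_norm_eq {ξ η : V} (h : ‖ξ‖ = ‖η‖) (r : ℝ) :
    ∫ y in ball (0 : V) r, Complex.exp (Complex.I * (⟪ξ, y⟫ : ℝ)) =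
      ∫ y in ball (0 : V) r, Complex.exp (Complex.I * (⟪η, y⟫ : ℝ)) := by
  set R := (Submodule.span ℝ {ξ - η})ᗮ.reflection
  have hR : R ξ = η := Submodule.reflection_sub h
  have hball : R ⁻¹' ball 0 r = ball 0 r := by ext; simp
  have := R.measurePreserving.setIntegral_preimage_emb R.toHomeomorph.measurableEmbedding
    (fun y => Complex.exp (Complex.I * (⟪η, y⟫ : ℝ))) (ball 0 r)
  rw [← this, hball, ← hR]
  simp only [LinearIsometryEquiv.inner_map_map]

lemma half_volume_le_re_setIntegral_ball_cexp {ξ : V} {r : ℝ} (h : ‖ξ‖ * r ≤ 1) :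
    volume.real (ball (0 : V) r) / 2 ≤
      (∫ y in ball (0 : V) r, Complex.exp (Complex.I * (⟪ξ, y⟫ : ℝ))).re := by
  have hre : (∫ y in ball (0 : V) r, Complex.exp (Complex.I * (⟪ξ, y⟫ : ℝ))).re =
      ∫ y in ball (0 : V) r, cos ⟪ξ, y⟫ := by
    rw [← Complex.reCLM_apply, ← Complex.reCLM.integral_comp_comm
      (integrableOn_ball_of_continuous (contDiff_cexp_I_mul_inner (m := 0) ξ).continuous 0 r)]
    simp [mul_comm Complex.I, Complex.exp_ofReal_mul_I_re]
  have hcos : ∀ y ∈ ball (0 : V) r, 1 / 2 ≤ cos ⟪ξ, y⟫ := fun y hy => by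
    have hinner : |⟪ξ, y⟫| ≤ 1 := (abs_real_inner_le_norm ξ y).trans <|
      (mul_le_mul_of_nonneg_left (mem_ball_zero_iff.1 hy).le (norm_nonneg ξ)).trans h
    linarith [one_sub_sq_div_two_le_cos (x := ⟪ξ, y⟫), (sq_le_one_iff_abs_le_one _).2 hinner]
  calc volume.real (ball (0 : V) r) / 2 = ∫ _ in ball (0 : V) r, (1 / 2 : ℝ) := by simp; ring
    _ ≤ ∫ y in ball (0 : V) r, cos ⟪ξ, y⟫ :=
      setIntegral_mono_on (integrableOn_ball_of_continuous continuous_const 0 r)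
        (integrableOn_ball_of_continuous (by fun_prop) 0 r) measurableSet_ball hcos
    _ = _ := hre.symm

variable {ω : ℝ} {ψ : V → ℝ}

lemma IsSphericalExpSum.setIntegral_ball_eq_mul (h : IsSphericalExpSum ω ψ) {ξ : V}
    (hξ : ‖ξ‖ = ω) (x : V) (r : ℝ) :
    ∫ y in ball x r, ψ y =
      (∫ y in ball (0 : V) r, Complex.exp (Complex.I * (⟪ξ, y⟫ : ℝ))).re * ψ x := by
  set Z := ∫ y in ball (0 : V) r, Complex.exp (Complex.I * (⟪ξ, y⟫ : ℝ))
  suffices ((∫ y in ball x r, ψ y : ℝ) : ℂ) = Z * ψ x by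
    simpa using congrArg Complex.re this
  obtain ⟨ι, hι, c, η, hη, hψ⟩ := h
  have hterm (i : ι) : ∫ y in ball x r, c i * Complex.exp (Complex.I * (⟪η i, y⟫ : ℝ)) =
      Z * (c i * Complex.exp (Complex.I * (⟪η i, x⟫ : ℝ))) := by
    have hZ : ∫ y in ball (0 : V) r, Complex.exp (Complex.I * (⟪η i, y⟫ : ℝ)) = Z :=
      setIntegral_ball_cexp_eq_of_norm_eq ((hη i).trans hξ.symm) r
    simp only [setIntegral_ball_eq _ x, inner_add_right, Complex.ofReal_add, mul_add,
      Complex.exp_add, integral_const_mul, hZ]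
    ring
  rw [← integral_complex_ofReal]
  simp only [hψ]
  have hint (i : ι) : IntegrableOn (fun y => c i * Complex.exp (Complex.I * (⟪η i, y⟫ : ℝ)))
      (ball x r) := integrableOn_ball_of_continuous
    (continuous_const.mul (contDiff_cexp_I_mul_inner (m := 0) (η i)).continuous) x r
  rw [integral_finsetSum _ fun i _ => hint i, Finset.mul_sum]
  exact Finset.sum_congr rfl fun i _ => hterm i

theorem IsSphericalExpSum.exists_setAverage_ball_eq (h : IsSphericalExpSum ω ψ) {r : ℝ}
    (hr : 0 < r) (hωr : ω * r ≤ 1) : ∃ C, 1 / 2 ≤ C ∧ ∀ x, ⨍ y in ball x r, ψ y = C * ψ x := by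
  obtain ⟨ι, hι, c, ξ, hξ, hψ⟩ := id h
  rcases isEmpty_or_nonempty ι with hempty | ⟨⟨i⟩⟩
  · have hzero : ψ = 0 := funext fun x => by simpa using hψ x
    exact ⟨1, by norm_num, by simp [hzero]⟩
  have hvol (x : V) : 0 < volume.real (ball x r) :=
    ENNReal.toReal_pos (measure_ball_pos _ _ hr).ne' measure_ball_lt_top.ne
  refine ⟨_, (le_div_iff₀ (hvol 0)).2 (le_of_eq_of_le (by ring)
    (half_volume_le_re_setIntegral_ball_cexp (ξ := ξ i) (by rwa [hξ i]))), fun x => ?_⟩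
  rw [setAverage_eq, h.setIntegral_ball_eq_mul (hξ i), Measure.addHaar_real_ball_center _ x,
    smul_eq_mul]
  ring

lemma IsSphericalExpSum.abs_le_two_mul_setAverage_abs (h : IsSphericalExpSum ω ψ) {r : ℝ}
    (hr : 0 < r) (hωr : ω * r ≤ 1) (x : V) : |ψ x| ≤ 2 * ⨍ y in ball x r, |ψ y| := by
  obtain ⟨C, hC, hmean⟩ := h.exists_setAverage_ball_eq hr hωr
  have habs : |⨍ y in ball x r, ψ y| ≤ ⨍ y in ball x r, |ψ y| := abs_integral_le_integral_abs
  rw [hmean, abs_mul, abs_of_nonneg (by linarith : 0 ≤ C)] at habs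
  nlinarith [abs_nonneg (ψ x)]

lemma IsSphericalExpSum.sq_le_four_mul_setAverage_sq (h : IsSphericalExpSum ω ψ) {r : ℝ}
    (hr : 0 < r) (hωr : ω * r ≤ 1) (x : V) : ψ x ^ 2 ≤ 4 * ⨍ y in ball x r, ψ y ^ 2 := by
  obtain ⟨C, hC, hmean⟩ := h.exists_setAverage_ball_eq hr hωr
  have hjensen : (⨍ y in ball x r, ψ y) ^ 2 ≤ ⨍ y in ball x r, ψ y ^ 2 :=
    even_two.convexOn_pow.map_set_average_le (continuous_pow 2).continuousOn isClosed_univ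
      (measure_ball_pos _ _ hr).ne' measure_ball_lt_top.ne (by simp)
      (integrableOn_ball_of_continuous h.continuous x r)
      (integrableOn_ball_of_continuous (h.continuous.pow 2) x r)
  rw [hmean, mul_pow] at hjensen
  have hsq : 1 / 4 ≤ C ^ 2 := by nlinarith
  nlinarith [sq_nonneg (ψ x)]

end MeanValue

section GaussianMass

lemma pow_mul_pow_le_pow_mul_pow {t T : ℝ} (ht : 0 ≤ t) (htT : t ≤ T) {i j : ℕ} (hij : i ≤ j) :
    t ^ j * T ^ i ≤ T ^ j * t ^ i := by
  obtain ⟨d, rfl⟩ := Nat.exists_eq_add_of_le hij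
  have := mul_le_mul_of_nonneg_left (pow_le_pow_left₀ ht htT d)
    (mul_nonneg (pow_nonneg ht i) (pow_nonneg (ht.trans htT) i))
  simp only [pow_add]
  linarith

-- A power series with nonnegative coefficients is log-convex in `log t`.
lemma mul_le_mul_of_hasSum_pow {b : ℕ → ℝ} {F : ℝ → ℝ} (hb : ∀ j, 0 ≤ b j)
    (hF : ∀ t, 0 < t → HasSum (fun j => b j * t ^ j) (F t)) {s t T : ℝ} (hs : 1 ≤ s)
    (ht : 0 < t) (htT : t ≤ T) : F (s * t) * F T ≤ F (s * T) * F t := by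
  have hs0 : 0 < s := one_pos.trans_le hs
  have hT : 0 < T := ht.trans_le htT
  have hprod {u v : ℝ} (hu : 0 < u) (hv : 0 < v) :
      HasSum (fun p : ℕ × ℕ => b p.1 * u ^ p.1 * (b p.2 * v ^ p.2)) (F u * F v) :=
    (hF u hu).mul (hF v hv) ((hF u hu).summable.mul_of_nonneg (hF v hv).summable
      (fun j => mul_nonneg (hb j) (pow_nonneg hu.le j))
      (fun j => mul_nonneg (hb j) (pow_nonneg hv.le j)))
  have hdiff := (hprod (mul_pos hs0 hT) ht).sub (hprod (mul_pos hs0 ht) hT)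
  have hsymm := hdiff.add ((Equiv.prodComm ℕ ℕ).hasSum_iff.2 hdiff)
  refine sub_nonneg.1 (nonneg_of_mul_nonneg_right (a := 2) ?_ two_pos)
  rw [two_mul]
  refine hsymm.nonneg fun ⟨i, j⟩ => ?_
  have hfactor : 0 ≤ b i * b j * ((s ^ i - s ^ j) * (T ^ i * t ^ j - t ^ i * T ^ j)) := by
    refine mul_nonneg (mul_nonneg (hb i) (hb j)) ?_
    rcases le_total i j with hij | hij
    · exact mul_nonneg_of_nonpos_of_nonpos (sub_nonpos.2 (pow_le_pow_right₀ hs hij))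
        (by linarith [pow_mul_pow_le_pow_mul_pow ht.le htT hij])
    · exact mul_nonneg (sub_nonneg.2 (pow_le_pow_right₀ hs hij))
        (sub_nonneg.2 (pow_mul_pow_le_pow_mul_pow ht.le htT hij))
  refine hfactor.trans_eq ?_
  simp only [Function.comp_apply, Equiv.prodComm_apply, Prod.fst_swap, Prod.snd_swap, mul_pow]
  ring

variable {V : Type*} [NormedAddCommGroup V] [InnerProductSpace ℝ V]

lemma posSemidef_inner_pow {ι : Type*} [Finite ι] (ξ : ι → V) (j : ℕ) :
    (Matrix.of fun k l => ⟪ξ k, ξ l⟫ ^ j).PosSemidef := by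
  cases nonempty_fintype ι
  induction j with
  | zero =>
    simpa [Matrix.vecMulVec, Matrix.of] using
      Matrix.posSemidef_vecMulVec_self_star (fun _ : ι => (1 : ℝ))
  | succ j ih =>
    have hsucc : (Matrix.of fun k l => ⟪ξ k, ξ l⟫ ^ (j + 1)) =
        (Matrix.of fun k l => ⟪ξ k, ξ l⟫ ^ j).hadamard (Matrix.gram ℝ ξ) :=
      Matrix.ext fun k l => pow_succ _ _
    exact hsucc ▸ ih.hadamard (Matrix.posSemidef_gram ℝ ξ)

lemma sum_mul_conj_mul_inner_pow_nonneg {ι : Type*} [Fintype ι] (c : ι → ℂ) (ξ : ι → V) (j : ℕ) :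
    0 ≤ ∑ k, ∑ l, (c k * starRingEnd ℂ (c l)).re * ⟪ξ k, ξ l⟫ ^ j := by
  have hreal (u : ι → ℝ) : 0 ≤ ∑ k, ∑ l, u k * u l * ⟪ξ k, ξ l⟫ ^ j := by
    simpa [dotProduct, Matrix.mulVec, Finset.mul_sum, mul_assoc, mul_left_comm, mul_comm]
      using (posSemidef_inner_pow ξ j).dotProduct_mulVec_nonneg u
  refine (add_nonneg (hreal fun k => (c k).re) (hreal fun k => (c k).im)).trans_eq ?_
  simp only [← Finset.sum_add_distrib]
  refine Finset.sum_congr rfl fun k _ => Finset.sum_congr rfl fun l _ => ?_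
  simp only [Complex.mul_re, Complex.conj_re, Complex.conj_im]
  ring

variable [FiniteDimensional ℝ V] [MeasurableSpace V] [BorelSpace V]

/-- The mass of `f ^ 2` against the unnormalised heat kernel of time `t` centred at `0`. It
stands in for the mass of `f ^ 2` in the ball of radius about `√t`; for an eigenfunction, unlike
that mass, it is log-convex in `log t` up to an explicit factor. -/
def gaussianMass (f : V → ℝ) (t : ℝ) : ℝ := ∫ y, f y ^ 2 * rexp (-‖y‖ ^ 2 / (4 * t))

lemma integrable_cexp_mul_gaussian (η : V) {t : ℝ} (ht : 0 < t) :
    Integrable fun y : V => Complex.exp (Complex.I * (⟪η, y⟫ : ℝ)) * rexp (-‖y‖ ^ 2 / (4 * t)) := by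
  have ht' : 0 < ((1 / (4 * t) : ℝ) : ℂ).re := by rw [Complex.ofReal_re]; positivity
  refine (GaussianFourier.integrable_cexp_neg_mul_sq_norm_add ht' Complex.I η).congr
    (Eventually.of_forall fun y => ?_)
  simp only [Complex.ofReal_exp, ← Complex.exp_add]
  push_cast
  ring_nf

lemma integral_cexp_mul_gaussian (η : V) {t : ℝ} (ht : 0 < t) :
    ∫ y : V, Complex.exp (Complex.I * (⟪η, y⟫ : ℝ)) * rexp (-‖y‖ ^ 2 / (4 * t)) =
      ((4 * π * t) ^ (finrank ℝ V / 2 : ℝ) * rexp (-t * ‖η‖ ^ 2) : ℝ) := by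
  have ht' : 0 < ((1 / (4 * t) : ℝ) : ℂ).re := by rw [Complex.ofReal_re]; positivity
  have htC : (t : ℂ) ≠ 0 := Complex.ofReal_ne_zero.2 ht.ne'
  have hint := GaussianFourier.integral_cexp_neg_mul_sq_norm_add ht' Complex.I η
  rw [Complex.ofReal_mul, Complex.ofReal_cpow (by positivity), Complex.ofReal_exp]
  convert hint using 2
  · ext y
    rw [Complex.ofReal_exp, ← Complex.exp_add]
    push_cast
    ring_nf
  · push_cast
    congr 1
    field_simp
  · rw [Complex.I_sq]
    push_cast
    congr 1
    field_simp

lemma gaussianMass_eq_of_eq_sum {ι : Type*} [Fintype ι] {f : V → ℝ} {c : ι → ℂ} {ξ : ι → V}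
    (hf : ∀ x, (f x : ℂ) = ∑ i, c i * Complex.exp (Complex.I * (⟪ξ i, x⟫ : ℝ))) {t : ℝ}
    (ht : 0 < t) :
    gaussianMass f t = (4 * π * t) ^ (finrank ℝ V / 2 : ℝ) *
      ∑ k, ∑ l, (c k * starRingEnd ℂ (c l)).re * rexp (-t * ‖ξ k - ξ l‖ ^ 2) := by
  set a := fun k l => c k * starRingEnd ℂ (c l)
  have hpoint (y : V) : ((f y ^ 2 * rexp (-‖y‖ ^ 2 / (4 * t)) : ℝ) : ℂ) = ∑ k, ∑ l, a k l *
      (Complex.exp (Complex.I * (⟪ξ k - ξ l, y⟫ : ℝ)) * rexp (-‖y‖ ^ 2 / (4 * t))) := by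
    have hsq : ((f y ^ 2 : ℝ) : ℂ) = f y * starRingEnd ℂ (f y : ℂ) := by
      rw [Complex.conj_ofReal, Complex.ofReal_pow, sq]
    rw [Complex.ofReal_mul, hsq, hf, map_sum, Finset.sum_mul_sum, Finset.sum_mul]
    refine Finset.sum_congr rfl fun k _ => (Finset.sum_mul _ _ _).trans <|
      Finset.sum_congr rfl fun l _ => ?_
    rw [map_mul, ← Complex.exp_conj, map_mul, Complex.conj_I, Complex.conj_ofReal, inner_sub_left,
      Complex.ofReal_sub, mul_sub, sub_eq_add_neg, Complex.exp_add, neg_mul]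
    ring
  have hint (k l : ι) := (integrable_cexp_mul_gaussian (ξ k - ξ l) ht).const_mul (a k l)
  have hsum : (gaussianMass f t : ℂ) = ∑ k, ∑ l,
      a k l * ((4 * π * t) ^ (finrank ℝ V / 2 : ℝ) * rexp (-t * ‖ξ k - ξ l‖ ^ 2) : ℝ) := by
    simp only [gaussianMass, ← integral_complex_ofReal, hpoint]
    rw [integral_finsetSum _ fun k _ => integrable_finsetSum _ fun l _ => hint k l]
    refine Finset.sum_congr rfl fun k _ => ?_
    rw [integral_finsetSum _ fun l _ => hint k l]
    simp only [integral_const_mul, integral_cexp_mul_gaussian _ ht]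
  have hre := congrArg Complex.re hsum
  simp only [Complex.ofReal_re, Complex.re_sum, Complex.re_mul_ofReal] at hre
  simp only [hre, Finset.mul_sum, mul_left_comm]
  rfl

variable {ω : ℝ} {f : V → ℝ}

lemma IsSphericalExpSum.exists_hasSum_gaussianMass (h : IsSphericalExpSum ω f) :
    ∃ b : ℕ → ℝ, (∀ j, 0 ≤ b j) ∧ ∀ t, 0 < t → HasSum (fun j => b j * t ^ j)
      (rexp (2 * ω ^ 2 * t) * ((4 * π * t) ^ (finrank ℝ V / 2 : ℝ))⁻¹ * gaussianMass f t) := by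
  obtain ⟨ι, _, c, ξ, hξ, hf⟩ := h
  set a := fun k l => (c k * starRingEnd ℂ (c l)).re
  refine ⟨fun j => 2 ^ j / j.factorial * ∑ k, ∑ l, a k l * ⟪ξ k, ξ l⟫ ^ j, fun j =>
    mul_nonneg (by positivity) (sum_mul_conj_mul_inner_pow_nonneg c ξ j), fun t ht => ?_⟩
  have hvalue : rexp (2 * ω ^ 2 * t) * ((4 * π * t) ^ (finrank ℝ V / 2 : ℝ))⁻¹ *
      gaussianMass f t = ∑ k, ∑ l, a k l * rexp (2 * ⟪ξ k, ξ l⟫ * t) := by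
    have hpow : (4 * π * t) ^ (finrank ℝ V / 2 : ℝ) ≠ 0 := by positivity
    rw [gaussianMass_eq_of_eq_sum hf ht, mul_assoc, inv_mul_cancel_left₀ hpow]
    simp only [Finset.mul_sum]
    refine Finset.sum_congr rfl fun k _ => Finset.sum_congr rfl fun l _ => ?_
    rw [mul_left_comm, ← Real.exp_add, norm_sub_sq_real, hξ, hξ]
    simp only [a]
    ring_nf
  have hseries (k l : ι) : HasSum (fun j : ℕ => a k l * ((2 * ⟪ξ k, ξ l⟫ * t) ^ j / j.factorial))
      (a k l * rexp (2 * ⟪ξ k, ξ l⟫ * t)) := by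
    have hexp := NormedSpace.expSeries_div_hasSum_exp (2 * ⟪ξ k, ξ l⟫ * t)
    rw [← Real.exp_eq_exp_ℝ] at hexp
    exact hexp.mul_left (a k l)
  have hcoeff (j : ℕ) : 2 ^ j / j.factorial * (∑ k, ∑ l, a k l * ⟪ξ k, ξ l⟫ ^ j) * t ^ j =
      ∑ k, ∑ l, a k l * ((2 * ⟪ξ k, ξ l⟫ * t) ^ j / j.factorial) := by
    simp only [Finset.mul_sum, Finset.sum_mul]
    refine Finset.sum_congr rfl fun k _ => Finset.sum_congr rfl fun l _ => ?_
    ring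
  rw [hvalue]
  simp only [hcoeff]
  exact hasSum_sum fun k _ => hasSum_sum fun l _ => hseries k l

theorem IsSphericalExpSum.gaussianMass_two_mul_le (h : IsSphericalExpSum ω f) {t T : ℝ}
    (ht : 0 < t) (htT : t ≤ T) :
    gaussianMass f (2 * t) * gaussianMass f T ≤
      rexp (2 * ω ^ 2 * (T - t)) * (gaussianMass f (2 * T) * gaussianMass f t) := by
  obtain ⟨b, hb, hsum⟩ := h.exists_hasSum_gaussianMass
  have hT : 0 < T := ht.trans_le htT
  have hmono := mul_le_mul_of_hasSum_pow hb hsum one_le_two ht htT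
  set d : ℝ := finrank ℝ V / 2
  have hpow {u : ℝ} (hu : 0 < u) : (4 * π * (2 * u)) ^ d = 2 ^ d * (4 * π * u) ^ d := by
    rw [mul_left_comm, Real.mul_rpow (by positivity) (by positivity)]
  have hexp {u v : ℝ} : rexp (2 * ω ^ 2 * (2 * u)) * rexp (2 * ω ^ 2 * v) =
      rexp (2 * ω ^ 2 * (2 * u + v)) := by
    rw [← Real.exp_add, mul_add]
  have hsplit : rexp (2 * ω ^ 2 * (2 * T + t)) =
      rexp (2 * ω ^ 2 * (2 * t + T)) * rexp (2 * ω ^ 2 * (T - t)) := by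
    rw [← Real.exp_add]; ring_nf
  set Q := (2 ^ d * (4 * π * t) ^ d)⁻¹ * ((4 * π * T) ^ d)⁻¹
  have hQ : 0 < rexp (2 * ω ^ 2 * (2 * t + T)) * Q := by positivity
  refine le_of_mul_le_mul_left ?_ hQ
  calc _ = rexp (2 * ω ^ 2 * (2 * t)) * ((4 * π * (2 * t)) ^ d)⁻¹ * gaussianMass f (2 * t) *
        (rexp (2 * ω ^ 2 * T) * ((4 * π * T) ^ d)⁻¹ * gaussianMass f T) := by
        rw [← hexp, hpow ht]; ring
    _ ≤ _ := hmono
    _ = rexp (2 * ω ^ 2 * (2 * T)) * rexp (2 * ω ^ 2 * t) * Q *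
        (gaussianMass f (2 * T) * gaussianMass f t) := by
        rw [hpow hT]; simp only [Q, mul_inv]; ring
    _ = _ := by rw [hexp, hsplit]; ring

end GaussianMass

section Doubling

variable {V : Type*} [NormedAddCommGroup V] [InnerProductSpace ℝ V]
variable {ψ : V → ℝ} {K₁ K₂ R ω : ℝ}

lemma IsSphericalExpSum.exists_abs_le (h : IsSphericalExpSum ω ψ) : ∃ M, ∀ x, |ψ x| ≤ M := by
  obtain ⟨ι, _, c, ξ, _, hψ⟩ := h
  refine ⟨∑ i, ‖c i‖, fun x => ?_⟩
  rw [← Real.norm_eq_abs, ← Complex.norm_real, hψ]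
  refine (norm_sum_le _ _).trans_eq (Finset.sum_congr rfl fun i _ => ?_)
  rw [norm_mul, mul_comm Complex.I, Complex.norm_exp_ofReal_mul_I, mul_one]

variable [FiniteDimensional ℝ V] [MeasurableSpace V] [BorelSpace V]

/-- An exponential sum of frequency `ω` which is equidistributed at the scale `R`, this scale
being at least the wavelength: the mass of `ψ ^ 2` in every ball of radius `R` is comparable with
`R ^ n`, where `n` is the dimension. The product `ω * R` is the parameter `λ ^ ε` of the paper. -/
structure IsEquidistributedWave (K₁ K₂ ω R : ℝ) (ψ : V → ℝ) : Prop where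
  isSphericalExpSum : IsSphericalExpSum ω ψ
  freq_pos : 0 < ω
  one_le_freq_mul : 1 ≤ ω * R
  le_mass : ∀ x, K₁ * R ^ finrank ℝ V ≤ ∫ y in ball x R, ψ y ^ 2
  mass_le : ∀ x, ∫ y in ball x R, ψ y ^ 2 ≤ K₂ * R ^ finrank ℝ V

lemma IsEquidistributedWave.scale_pos (h : IsEquidistributedWave K₁ K₂ ω R ψ) : 0 < R :=
  pos_of_mul_pos_right (one_pos.trans_le h.one_le_freq_mul) h.freq_pos.le

lemma IsEquidistributedWave.neg (h : IsEquidistributedWave K₁ K₂ ω R ψ) :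
    IsEquidistributedWave K₁ K₂ ω R fun x => -ψ x where
  isSphericalExpSum := h.isSphericalExpSum.neg
  freq_pos := h.freq_pos
  one_le_freq_mul := h.one_le_freq_mul
  le_mass x := by simpa only [neg_sq] using h.le_mass x
  mass_le x := by simpa only [neg_sq] using h.mass_le x

lemma IsEquidistributedWave.comp_add_left (h : IsEquidistributedWave K₁ K₂ ω R ψ) (p : V) :
    IsEquidistributedWave K₁ K₂ ω R fun x => ψ (p + x) where
  isSphericalExpSum := h.isSphericalExpSum.comp_add_left p
  freq_pos := h.freq_pos
  one_le_freq_mul := h.one_le_freq_mul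
  le_mass x := by
    have := h.le_mass (p + x)
    rw [setIntegral_ball_eq] at this ⊢
    simpa only [add_assoc] using this
  mass_le x := by
    have := h.mass_le (p + x)
    rw [setIntegral_ball_eq] at this ⊢
    simpa only [add_assoc] using this

lemma setIntegral_ball_mono {f : V → ℝ} (hf : Continuous f) {x z : V} {r s : ℝ}
    (hf0 : ∀ y ∈ ball z s, 0 ≤ f y) (hsub : ball x r ⊆ ball z s) :
    ∫ y in ball x r, f y ≤ ∫ y in ball z s, f y :=
  setIntegral_mono_set (integrableOn_ball_of_continuous hf z s)
    (ae_restrict_of_forall_mem measurableSet_ball hf0) hsub.eventuallyLE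

lemma setAverage_ball_eq (f : V → ℝ) (x : V) {r : ℝ} (hr : 0 < r) :
    ⨍ y in ball x r, f y =
      (r ^ finrank ℝ V * volume.real (ball (0 : V) 1))⁻¹ * ∫ y in ball x r, f y := by
  rw [setAverage_eq, measureReal_def, Measure.addHaar_ball_of_pos volume x hr, ENNReal.toReal_mul,
    ENNReal.toReal_ofReal (by positivity), smul_eq_mul, measureReal_def]

lemma volume_real_unit_ball_pos : 0 < volume.real (ball (0 : V) 1) :=
  ENNReal.toReal_pos (measure_ball_pos _ _ one_pos).ne' measure_ball_lt_top.ne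

lemma IsEquidistributedWave.sq_le (h : IsEquidistributedWave K₁ K₂ ω R ψ) (x : V) :
    ψ x ^ 2 ≤ 4 * K₂ / volume.real (ball (0 : V) 1) * (ω * R) ^ finrank ℝ V := by
  have hψ := h.isSphericalExpSum
  have hω := h.freq_pos
  have hv := volume_real_unit_ball_pos (V := V)
  have hωR : ω⁻¹ ≤ R := (inv_le_iff_one_le_mul₀' hω).2 h.one_le_freq_mul
  have hmass : ∫ y in ball x ω⁻¹, ψ y ^ 2 ≤ K₂ * R ^ finrank ℝ V :=
    (setIntegral_ball_mono (hψ.continuous.pow 2) (fun y _ => sq_nonneg _)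
      (ball_subset_ball hωR)).trans (h.mass_le x)
  calc ψ x ^ 2 ≤ 4 * ⨍ y in ball x ω⁻¹, ψ y ^ 2 :=
        hψ.sq_le_four_mul_setAverage_sq (inv_pos.2 hω) (mul_inv_cancel₀ hω.ne').le x
    _ ≤ 4 * ((ω⁻¹ ^ finrank ℝ V * volume.real (ball (0 : V) 1))⁻¹ * (K₂ * R ^ finrank ℝ V)) := by
        rw [setAverage_ball_eq _ _ (inv_pos.2 hω)]
        gcongr
    _ = _ := by rw [mul_pow, inv_pow]; field_simp

lemma integral_gaussian_inner {t : ℝ} (ht : 0 < t) :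
    ∫ y : V, rexp (-‖y‖ ^ 2 / (4 * t)) = (4 * π * t) ^ (finrank ℝ V / 2 : ℝ) := by
  have := GaussianFourier.integral_rexp_neg_mul_sq_norm (V := V) (b := 1 / (4 * t)) (by positivity)
  convert this using 3
  · ring_nf
  · field_simp

lemma integrable_gaussian_inner {t : ℝ} (ht : 0 < t) :
    Integrable fun y : V => rexp (-‖y‖ ^ 2 / (4 * t)) :=
  Integrable.of_integral_ne_zero <| by rw [integral_gaussian_inner ht]; positivity

lemma IsSphericalExpSum.integrable_sq_mul_gaussian (h : IsSphericalExpSum ω ψ) {t : ℝ}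
    (ht : 0 < t) : Integrable fun y => ψ y ^ 2 * rexp (-‖y‖ ^ 2 / (4 * t)) := by
  obtain ⟨M, hM⟩ := h.exists_abs_le
  refine (integrable_gaussian_inner ht).bdd_mul (c := M ^ 2)
    (h.continuous.pow 2).aestronglyMeasurable (Eventually.of_forall fun y => ?_)
  rw [norm_pow, Real.norm_eq_abs]
  exact pow_le_pow_left₀ (abs_nonneg _) (hM y) 2

lemma IsSphericalExpSum.exp_mul_setIntegral_le_gaussianMass (h : IsSphericalExpSum ω ψ) {t r : ℝ}
    (ht : 0 < t) :
    rexp (-r ^ 2 / (4 * t)) * ∫ y in ball 0 r, ψ y ^ 2 ≤ gaussianMass ψ t := by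
  rw [← integral_const_mul]
  have hint := h.integrable_sq_mul_gaussian ht
  have hball : IntegrableOn (fun y => ψ y ^ 2) (ball 0 r) :=
    integrableOn_ball_of_continuous (h.continuous.pow 2) 0 r
  refine (setIntegral_mono_on (hball.const_mul _) hint.integrableOn
    measurableSet_ball fun y hy => ?_).trans
    (setIntegral_le_integral hint (Eventually.of_forall fun y => by positivity))
  have hyr : ‖y‖ ≤ r := (mem_ball_zero_iff.1 hy).le
  rw [mul_comm]
  gcongr

lemma IsSphericalExpSum.gaussianMass_le_setIntegral_add (h : IsSphericalExpSum ω ψ) {t r : ℝ}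
    (ht : 0 < t) (hr : 0 ≤ r) :
    gaussianMass ψ t ≤
      (∫ y in ball 0 r, ψ y ^ 2) + rexp (-r ^ 2 / (8 * t)) * gaussianMass ψ (2 * t) := by
  have hball : IntegrableOn (fun y => ψ y ^ 2) (ball 0 r) :=
    integrableOn_ball_of_continuous (h.continuous.pow 2) 0 r
  have htail := (h.integrable_sq_mul_gaussian (mul_pos two_pos ht)).const_mul
    (rexp (-r ^ 2 / (8 * t)))
  rw [← integral_indicator measurableSet_ball, gaussianMass, gaussianMass, ← integral_const_mul,
    ← integral_add (hball.integrable_indicator measurableSet_ball) htail]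
  refine integral_mono (h.integrable_sq_mul_gaussian ht)
    ((hball.integrable_indicator measurableSet_ball).add htail) fun y => ?_
  dsimp only
  by_cases hy : y ∈ ball 0 r
  · rw [Set.indicator_of_mem hy]
    refine le_add_of_le_of_nonneg (mul_le_of_le_one_right (sq_nonneg _) ?_) (by positivity)
    exact Real.exp_le_one_iff.2 (div_nonpos_of_nonpos_of_nonneg (by simp) (by positivity))
  · have hry : r ≤ ‖y‖ := by simpa using hy
    rw [Set.indicator_of_notMem hy, zero_add, mul_left_comm, ← Real.exp_add]
    gcongr
    have hr2 : r ^ 2 / (8 * t) ≤ ‖y‖ ^ 2 / (8 * t) := by gcongr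
    have hsplit : ‖y‖ ^ 2 / (4 * t) = ‖y‖ ^ 2 / (8 * t) + ‖y‖ ^ 2 / (4 * (2 * t)) := by
      field_simp
      ring
    simp only [neg_div]
    linarith

lemma IsSphericalExpSum.gaussianMass_le_mul_rpow (h : IsSphericalExpSum ω ψ) {M t : ℝ}
    (hM : ∀ x, ψ x ^ 2 ≤ M) (ht : 0 < t) :
    gaussianMass ψ t ≤ M * (4 * π * t) ^ (finrank ℝ V / 2 : ℝ) := by
  rw [← integral_gaussian_inner ht, ← integral_const_mul]
  exact integral_mono (h.integrable_sq_mul_gaussian ht)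
    ((integrable_gaussian_inner ht).const_mul M)
    fun y => mul_le_mul_of_nonneg_right (hM y) (Real.exp_nonneg _)

lemma IsEquidistributedWave.exp_mul_le_gaussianMass (h : IsEquidistributedWave K₁ K₂ ω R ψ)
    {t : ℝ} (ht : 0 < t) :
    rexp (-R ^ 2 / (4 * t)) * (K₁ * R ^ finrank ℝ V) ≤ gaussianMass ψ t :=
  (mul_le_mul_of_nonneg_left (h.le_mass 0) (Real.exp_nonneg _)).trans
    (h.isSphericalExpSum.exp_mul_setIntegral_le_gaussianMass ht)

lemma IsEquidistributedWave.gaussianMass_pos (h : IsEquidistributedWave K₁ K₂ ω R ψ)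
    (hK₁ : 0 < K₁) {t : ℝ} (ht : 0 < t) : 0 < gaussianMass ψ t := by
  have := h.scale_pos
  exact lt_of_lt_of_le (by positivity) (h.exp_mul_le_gaussianMass ht)

lemma IsEquidistributedWave.gaussianMass_two_mul_div_le (h : IsEquidistributedWave K₁ K₂ ω R ψ)
    (hK₂ : 0 ≤ K₂) :
    gaussianMass ψ (2 * (R / ω)) ≤ 4 * K₂ / volume.real (ball (0 : V) 1) *
      (8 * π) ^ (finrank ℝ V / 2 : ℝ) * rexp (finrank ℝ V * (ω * R)) * R ^ finrank ℝ V := by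
  have hω := h.freq_pos
  have hR := h.scale_pos
  have htime : 4 * π * (2 * (R / ω)) ≤ 8 * π * R ^ 2 := by
    have : R / ω ≤ R ^ 2 := by
      rw [div_le_iff₀ hω]
      nlinarith [h.one_le_freq_mul]
    nlinarith [Real.pi_pos]
  have hpow : (8 * π * R ^ 2) ^ (finrank ℝ V / 2 : ℝ) =
      (8 * π) ^ (finrank ℝ V / 2 : ℝ) * R ^ finrank ℝ V := by
    rw [Real.mul_rpow (by positivity) (by positivity), ← Real.rpow_natCast R 2,
      ← Real.rpow_mul hR.le, ← Real.rpow_natCast R]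
    congr 2
    push_cast
    ring
  have hexp : (ω * R) ^ finrank ℝ V ≤ rexp (finrank ℝ V * (ω * R)) := by
    rw [Real.exp_nat_mul]
    exact pow_le_pow_left₀ (by positivity) (by linarith [Real.add_one_le_exp (ω * R)]) _
  calc gaussianMass ψ (2 * (R / ω))
      ≤ 4 * K₂ / volume.real (ball (0 : V) 1) * (ω * R) ^ finrank ℝ V *
        (4 * π * (2 * (R / ω))) ^ (finrank ℝ V / 2 : ℝ) :=
        h.isSphericalExpSum.gaussianMass_le_mul_rpow h.sq_le (by positivity)
    _ ≤ 4 * K₂ / volume.real (ball (0 : V) 1) * rexp (finrank ℝ V * (ω * R)) *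
        (8 * π * R ^ 2) ^ (finrank ℝ V / 2 : ℝ) := by gcongr
    _ = _ := by rw [hpow]; ring

lemma exists_gaussianMass_two_mul_div_le (hK₁ : 0 < K₁) (hK₂ : 0 ≤ K₂) :
    ∃ C, 0 < C ∧ ∀ {ψ : V → ℝ} {ω R : ℝ}, IsEquidistributedWave K₁ K₂ ω R ψ →
      gaussianMass ψ (2 * (R / ω)) ≤ rexp (C * (ω * R)) * gaussianMass ψ (R / ω) := by
  set n := finrank ℝ V
  set A := 4 * K₂ / volume.real (ball (0 : V) 1) * (8 * π) ^ (n / 2 : ℝ)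
  have hA : 0 ≤ A / K₁ := by positivity
  refine ⟨A / K₁ + n + 1, by positivity, fun {ψ ω R} h => ?_⟩
  have hω := h.freq_pos
  have hR := h.scale_pos
  have hβ := h.one_le_freq_mul
  have hlower := h.exp_mul_le_gaussianMass (div_pos hR hω)
  rw [show -R ^ 2 / (4 * (R / ω)) = -(ω * R) / 4 by field_simp] at hlower
  have hAexp : A / K₁ ≤ rexp (A / K₁ * (ω * R)) := by
    nlinarith [Real.add_one_le_exp (A / K₁ * (ω * R))]
  calc gaussianMass ψ (2 * (R / ω)) ≤ A * rexp (n * (ω * R)) * R ^ n :=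
        h.gaussianMass_two_mul_div_le hK₂
    _ = A / K₁ * rexp (n * (ω * R)) * rexp (ω * R / 4) *
        (rexp (-(ω * R) / 4) * (K₁ * R ^ n)) := by
        rw [neg_div, Real.exp_neg]
        field_simp
    _ ≤ rexp (A / K₁ * (ω * R)) * rexp (n * (ω * R)) * rexp (ω * R) *
        gaussianMass ψ (R / ω) := by
        gcongr
        linarith
    _ = _ := by simp only [← Real.exp_add]; ring_nf

lemma exists_gaussianMass_two_mul_le (hK₁ : 0 < K₁) (hK₂ : 0 ≤ K₂) :
    ∃ C, 0 < C ∧ ∀ {ψ : V → ℝ} {ω R : ℝ}, IsEquidistributedWave K₁ K₂ ω R ψ →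
      ∀ t, 0 < t → t ≤ R / ω → gaussianMass ψ (2 * t) ≤ rexp (C * (ω * R)) * gaussianMass ψ t := by
  obtain ⟨C, hC, hdouble⟩ := exists_gaussianMass_two_mul_div_le (V := V) hK₁ hK₂
  refine ⟨C + 2, by positivity, fun {ψ ω R} h t ht htT => ?_⟩
  have hω := h.freq_pos
  have hmass := h.gaussianMass_pos hK₁ ht
  have hmassT := h.gaussianMass_pos hK₁ (ht.trans_le htT)
  have hrate : 2 * ω ^ 2 * (R / ω - t) ≤ 2 * (ω * R) := by
    rw [mul_sub, show 2 * ω ^ 2 * (R / ω) = 2 * (ω * R) by field_simp]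
    exact sub_le_self _ (by positivity)
  refine le_of_mul_le_mul_right ?_ hmassT
  calc gaussianMass ψ (2 * t) * gaussianMass ψ (R / ω)
      ≤ rexp (2 * ω ^ 2 * (R / ω - t)) * (gaussianMass ψ (2 * (R / ω)) * gaussianMass ψ t) :=
        h.isSphericalExpSum.gaussianMass_two_mul_le ht htT
    _ ≤ rexp (2 * ω ^ 2 * (R / ω - t)) *
        (rexp (C * (ω * R)) * gaussianMass ψ (R / ω) * gaussianMass ψ t) := by
        gcongr
        exact hdouble h
    _ ≤ rexp (2 * (ω * R)) *
        (rexp (C * (ω * R)) * gaussianMass ψ (R / ω) * gaussianMass ψ t) := by gcongr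
    _ = rexp (2 * (ω * R)) * rexp (C * (ω * R)) * gaussianMass ψ t *
        gaussianMass ψ (R / ω) := by ring
    _ = _ := by rw [← Real.exp_add, ← add_mul, add_comm]

lemma gaussianMass_nonneg (f : V → ℝ) (t : ℝ) : 0 ≤ gaussianMass f t :=
  integral_nonneg fun _ => mul_nonneg (sq_nonneg _) (Real.exp_nonneg _)

lemma IsSphericalExpSum.gaussianMass_le_two_mul_setIntegral (h : IsSphericalExpSum ω ψ)
    {t r s : ℝ} (ht : 0 < t) (hr : 0 ≤ r) (hs : gaussianMass ψ (2 * t) ≤ rexp s * gaussianMass ψ t)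
    (hts : 8 * t * (s + 1) ≤ r ^ 2) :
    gaussianMass ψ t ≤ 2 * ∫ y in ball 0 r, ψ y ^ 2 := by
  have hexponent : -r ^ 2 / (8 * t) + s ≤ -1 := by
    have : s + 1 ≤ r ^ 2 / (8 * t) := by
      rw [le_div_iff₀ (by positivity)]
      linarith
    rw [neg_div]
    linarith
  have htail : rexp (-r ^ 2 / (8 * t)) * gaussianMass ψ (2 * t) ≤ 1 / 2 * gaussianMass ψ t :=
    calc rexp (-r ^ 2 / (8 * t)) * gaussianMass ψ (2 * t)
        ≤ rexp (-r ^ 2 / (8 * t)) * (rexp s * gaussianMass ψ t) := by gcongr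
      _ = rexp (-r ^ 2 / (8 * t) + s) * gaussianMass ψ t := by rw [Real.exp_add, mul_assoc]
      _ ≤ 1 / 2 * gaussianMass ψ t := by
          refine mul_le_mul_of_nonneg_right ?_ (gaussianMass_nonneg ψ t)
          linarith [Real.exp_le_exp.2 hexponent, Real.exp_neg_one_lt_d9]
  linarith [h.gaussianMass_le_setIntegral_add ht hr]

lemma exists_setIntegral_ball_zero_le (hK₁ : 0 < K₁) (hK₂ : 0 ≤ K₂) :
    ∃ C, 0 < C ∧ ∀ {ψ : V → ℝ} {ω R : ℝ}, IsEquidistributedWave K₁ K₂ ω R ψ →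
      ∀ r, 0 < r → ω * r ≤ 1 → 0 < ∫ y in ball 0 (r / 2), ψ y ^ 2 ∧
        ∫ y in ball 0 (4 * r), ψ y ^ 2 ≤
          rexp (C * (ω * R)) * ∫ y in ball 0 (r / 2), ψ y ^ 2 := by
  obtain ⟨C, hC, hdouble⟩ := exists_gaussianMass_two_mul_le (V := V) hK₁ hK₂
  refine ⟨128 * (C + 1) + 1, by positivity, fun {ψ ω R} h r hr hωr => ?_⟩
  have hω := h.freq_pos
  have hβ := h.one_le_freq_mul
  have hR := h.scale_pos
  -- At this time the Gaussian tail outside the ball of radius `r / 2` beats the doubling constant.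
  set t := r ^ 2 / (32 * (C + 1) * (ω * R)) with ht_def
  have ht : 0 < t := by positivity
  have htT : t ≤ R / ω := by
    rw [ht_def, div_le_div_iff₀ (by positivity) hω]
    nlinarith [mul_pos hC (mul_pos hω hR), mul_pos hω hr]
  have hmass := h.gaussianMass_pos hK₁ ht
  have hcore : gaussianMass ψ t ≤ 2 * ∫ y in ball 0 (r / 2), ψ y ^ 2 := by
    refine h.isSphericalExpSum.gaussianMass_le_two_mul_setIntegral ht (by positivity)
      (hdouble h t ht htT) ?_
    have hscale : 8 * t * ((C + 1) * (ω * R)) = (r / 2) ^ 2 := by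
      rw [ht_def]
      field_simp
      norm_num
    rw [← hscale]
    gcongr
    linarith
  refine ⟨by linarith, ?_⟩
  have hexponent : -(4 * r) ^ 2 / (4 * t) = -(128 * (C + 1) * (ω * R)) := by
    rw [ht_def]
    field_simp
    norm_num
  have houter := h.isSphericalExpSum.exp_mul_setIntegral_le_gaussianMass (r := 4 * r) ht
  rw [hexponent, Real.exp_neg, inv_mul_le_iff₀ (Real.exp_pos _)] at houter
  have htwo : 2 ≤ rexp (ω * R) := by linarith [Real.add_one_le_exp (ω * R)]
  calc ∫ y in ball 0 (4 * r), ψ y ^ 2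
      ≤ rexp (128 * (C + 1) * (ω * R)) * (2 * ∫ y in ball 0 (r / 2), ψ y ^ 2) :=
        houter.trans (by gcongr)
    _ ≤ rexp (128 * (C + 1) * (ω * R)) * (rexp (ω * R) * ∫ y in ball 0 (r / 2), ψ y ^ 2) := by
        gcongr
    _ = _ := by rw [← mul_assoc, ← Real.exp_add, ← add_one_mul]

theorem exists_setIntegral_ball_le (hK₁ : 0 < K₁) (hK₂ : 0 ≤ K₂) :
    ∃ C, 0 < C ∧ ∀ {ψ : V → ℝ} {ω R : ℝ}, IsEquidistributedWave K₁ K₂ ω R ψ →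
      ∀ p r, 0 < r → ω * r ≤ 1 → 0 < ∫ y in ball p (r / 2), ψ y ^ 2 ∧
        ∫ y in ball p (4 * r), ψ y ^ 2 ≤
          rexp (C * (ω * R)) * ∫ y in ball p (r / 2), ψ y ^ 2 := by
  obtain ⟨C, hC, hdouble⟩ := exists_setIntegral_ball_zero_le (V := V) hK₁ hK₂
  refine ⟨C, hC, fun h p r hr hωr => ?_⟩
  simp only [setIntegral_ball_eq _ p]
  exact hdouble (h.comp_add_left p) r hr hωr

end Doubling

section Growth

variable {V : Type*} [NormedAddCommGroup V] [InnerProductSpace ℝ V] [FiniteDimensional ℝ V]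
  [MeasurableSpace V] [BorelSpace V]
variable {ψ : V → ℝ} {K₁ K₂ ω : ℝ}

lemma setIntegral_ball_le_mul {f : V → ℝ} (hf : Continuous f) {x : V} {r M : ℝ} (hr : 0 < r)
    (hM : ∀ y ∈ ball x r, f y ≤ M) :
    ∫ y in ball x r, f y ≤ M * (r ^ finrank ℝ V * volume.real (ball (0 : V) 1)) := by
  have hv := volume_real_unit_ball_pos (V := V)
  have hconst : ⨍ _ in ball x r, M = M :=
    setAverage_const (measure_ball_pos _ _ hr).ne' measure_ball_lt_top.ne M
  rw [setAverage_ball_eq _ _ hr, inv_mul_eq_iff_eq_mul₀ (by positivity), mul_comm] at hconst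
  rw [← hconst]
  exact setIntegral_mono_on (integrableOn_ball_of_continuous hf x r)
    (integrableOn_ball_of_continuous continuous_const x r) measurableSet_ball hM

lemma setAverage_ball_le_mul {f : V → ℝ} (hf : Continuous f) {x z : V} {r s : ℝ}
    (hf0 : ∀ y ∈ ball z s, 0 ≤ f y) (hr : 0 < r) (hs : 0 < s) (hsub : ball x r ⊆ ball z s) :
    ⨍ y in ball x r, f y ≤ (s / r) ^ finrank ℝ V * ⨍ y in ball z s, f y := by
  have hv := volume_real_unit_ball_pos (V := V)
  rw [setAverage_ball_eq _ _ hr, setAverage_ball_eq _ _ hs]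
  calc _ ≤ (r ^ finrank ℝ V * volume.real (ball (0 : V) 1))⁻¹ * ∫ y in ball z s, f y :=
        mul_le_mul_of_nonneg_left (setIntegral_ball_mono hf hf0 hsub) (by positivity)
    _ = _ := by rw [div_pow]; field_simp

lemma setAverage_ball_add_const {f : V → ℝ} (hf : Continuous f) (x : V) {r : ℝ} (hr : 0 < r)
    (b : ℝ) : ⨍ y in ball x r, (f y + b) = (⨍ y in ball x r, f y) + b := by
  have hconst : ⨍ _ in ball x r, b = b :=
    setAverage_const (measure_ball_pos _ _ hr).ne' measure_ball_lt_top.ne b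
  nth_rewrite 2 [← hconst]
  simp only [setAverage_eq, integral_add (integrableOn_ball_of_continuous hf x r)
    (integrableOn_ball_of_continuous continuous_const x r), smul_add]

lemma IsSphericalExpSum.setAverage_abs_le_of_eq_zero (h : IsSphericalExpSum ω ψ) {p : V}
    {r B : ℝ} (hr : 0 < r) (hωr : ω * r ≤ 1) (hp : ψ p = 0) (hB : ∀ x ∈ ball p r, -ψ x ≤ B) :
    ⨍ y in ball p r, |ψ y| ≤ 2 * B := by
  obtain ⟨C, -, hmean⟩ := h.exists_setAverage_ball_eq hr hωr
  have hB0 : 0 ≤ B := by simpa [hp] using hB p (mem_ball_self hr)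
  have hψ := integrableOn_ball_of_continuous h.continuous p r
  have hconst : IntegrableOn (fun _ => 2 * B) (ball p r) :=
    integrableOn_ball_of_continuous continuous_const p r
  calc ⨍ y in ball p r, |ψ y| ≤ ⨍ y in ball p r, (ψ y + 2 * B) := by
        rw [setAverage_eq, setAverage_eq]
        refine smul_le_smul_of_nonneg_left (setIntegral_mono_on hψ.abs (hψ.add hconst)
          measurableSet_ball fun y hy => ?_) (by positivity)
        rw [abs_le]
        constructor <;> linarith [hB y hy]
    _ = 2 * B := by
        rw [setAverage_ball_add_const h.continuous p hr, hmean, hp, mul_zero, zero_add]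

lemma IsSphericalExpSum.abs_le_of_eq_zero (h : IsSphericalExpSum ω ψ) {p : V} {r B : ℝ}
    (hr : 0 < r) (hωr : ω * r ≤ 1) (hp : ψ p = 0) (hB : ∀ x ∈ ball p r, -ψ x ≤ B) {x : V}
    (hx : x ∈ ball p (r / 2)) : |ψ x| ≤ 4 * 2 ^ finrank ℝ V * B := by
  have hsub : ball x (r / 2) ⊆ ball p r := ball_subset_ball' (by linarith [mem_ball.1 hx])
  calc |ψ x| ≤ 2 * ⨍ y in ball x (r / 2), |ψ y| :=
        h.abs_le_two_mul_setAverage_abs (half_pos hr) (by linarith) x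
    _ ≤ 2 * ((r / (r / 2)) ^ finrank ℝ V * ⨍ y in ball p r, |ψ y|) := by
        gcongr
        exact setAverage_ball_le_mul h.continuous.abs (fun y _ => abs_nonneg _) (half_pos hr) hr
          hsub
    _ ≤ 2 * (2 ^ finrank ℝ V * (2 * B)) := by
        rw [show r / (r / 2) = 2 by field_simp]
        gcongr
        exact h.setAverage_abs_le_of_eq_zero hr hωr hp hB
    _ = _ := by ring

lemma IsSphericalExpSum.setIntegral_sq_le_of_eq_zero (h : IsSphericalExpSum ω ψ) {p : V} {r B : ℝ}
    (hr : 0 < r) (hωr : ω * r ≤ 1) (hp : ψ p = 0) (hB : ∀ x ∈ ball p r, -ψ x ≤ B) :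
    ∫ y in ball p (r / 2), ψ y ^ 2 ≤
      (4 * 2 ^ finrank ℝ V * B) ^ 2 * (r ^ finrank ℝ V * volume.real (ball (0 : V) 1)) := by
  refine (setIntegral_ball_le_mul (h.continuous.pow 2) (half_pos hr) fun y hy =>
    sq_le_sq.2 ((h.abs_le_of_eq_zero hr hωr hp hB hy).trans (le_abs_self _))).trans ?_
  gcongr
  linarith

theorem exists_abs_le_of_neg_le (hK₁ : 0 < K₁) (hK₂ : 0 ≤ K₂) :
    ∃ C, 0 < C ∧ ∀ {ψ : V → ℝ} {ω R : ℝ}, IsEquidistributedWave K₁ K₂ ω R ψ →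
      ∀ {p : V} {r B : ℝ}, 0 < r → ω * r ≤ 1 → ψ p = 0 → (∀ x ∈ ball p r, -ψ x ≤ B) →
        0 < B ∧ ∀ y ∈ closedBall p (2 * r), |ψ y| ≤ rexp (C * (ω * R)) * B := by
  obtain ⟨C, hC, hdouble⟩ := exists_setIntegral_ball_le (V := V) hK₁ hK₂
  set D : ℝ := 8 * 2 ^ finrank ℝ V
  refine ⟨C + D, by positivity, fun {ψ ω R} h p r B hr hωr hp hB => ?_⟩
  have hψ := h.isSphericalExpSum
  have hβ := h.one_le_freq_mul
  have hv := volume_real_unit_ball_pos (V := V)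
  have hB0 : 0 ≤ B := by simpa [hp] using hB p (mem_ball_self hr)
  obtain ⟨hmass_pos, hmass⟩ := hdouble h p r hr hωr
  have hinner := hψ.setIntegral_sq_le_of_eq_zero hr hωr hp hB
  rw [show 4 * 2 ^ finrank ℝ V * B = D / 2 * B by simp only [D]; ring] at hinner
  refine ⟨hB0.lt_of_ne' ?_, fun y hy => ?_⟩
  · rintro rfl
    simp [hmass_pos.not_ge] at hinner
  have hexp : 1 ≤ rexp (C * (ω * R)) := Real.one_le_exp (by positivity)
  have hsq : ψ y ^ 2 ≤ (rexp (C * (ω * R)) * (D * B)) ^ 2 := by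
    have hsub : ball y r ⊆ ball p (4 * r) := ball_subset_ball' (by linarith [mem_closedBall.1 hy])
    have houter : ∫ z in ball y r, ψ z ^ 2 ≤ rexp (C * (ω * R)) *
        ((D / 2 * B) ^ 2 * (r ^ finrank ℝ V * volume.real (ball (0 : V) 1))) :=
      (setIntegral_ball_mono (hψ.continuous.pow 2) (fun y _ => sq_nonneg _) hsub).trans
        (hmass.trans (mul_le_mul_of_nonneg_left hinner (Real.exp_nonneg _)))
    calc ψ y ^ 2 ≤ 4 * ⨍ z in ball y r, ψ z ^ 2 := hψ.sq_le_four_mul_setAverage_sq hr hωr y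
      _ ≤ 4 * ((r ^ finrank ℝ V * volume.real (ball (0 : V) 1))⁻¹ * (rexp (C * (ω * R)) *
          ((D / 2 * B) ^ 2 * (r ^ finrank ℝ V * volume.real (ball (0 : V) 1))))) := by
          rw [setAverage_ball_eq _ _ hr]
          exact mul_le_mul_of_nonneg_left
            (mul_le_mul_of_nonneg_left houter (by positivity)) zero_le_four
      _ = rexp (C * (ω * R)) * (D * B) ^ 2 := by field_simp; ring
      _ ≤ _ := by
          rw [mul_pow (rexp _)]
          exact mul_le_mul_of_nonneg_right (le_self_pow₀ hexp two_ne_zero) (sq_nonneg _)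
  have hD : D ≤ rexp (D * (ω * R)) := by
    have hD0 : 0 ≤ D := by positivity
    nlinarith [Real.add_one_le_exp (D * (ω * R))]
  calc |ψ y| ≤ rexp (C * (ω * R)) * (D * B) := abs_le_of_sq_le_sq hsq (by positivity)
    _ ≤ rexp (C * (ω * R)) * (rexp (D * (ω * R)) * B) := by gcongr
    _ = _ := by rw [← mul_assoc, ← Real.exp_add, ← add_mul]

end Growth

section NegativeBalls

lemma half_le_card_filter_le_mul {Q : ℕ → ℝ} {J : ℕ} {a : ℝ} (ha : 0 < a) (h0 : 0 < Q 0)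
    (hmono : ∀ k < J, Q k ≤ Q (k + 1)) (hJ : Q J ≤ rexp (a * J / 2) * Q 0) :
    (J : ℝ) / 2 ≤ ((Finset.range J).filter fun k => Q (k + 1) ≤ rexp a * Q k).card := by
  set N : ℕ → ℝ := fun m => ((Finset.range m).filter fun k => Q (k + 1) ≤ rexp a * Q k).card
    with hN
  have hgrowth : ∀ m ≤ J, rexp (a * (m - N m)) * Q 0 ≤ Q m := by
    intro m
    induction m with
    | zero => simp [hN]
    | succ m ih =>
      intro hm
      have ih := ih (by omega)
      simp only [hN, Finset.range_add_one, Finset.filter_insert] at ih ⊢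
      split_ifs with hgood
      · rw [Finset.card_insert_of_notMem (by simp)]
        push_cast
        rw [add_sub_add_right_eq_sub]
        exact ih.trans (hmono m (by omega))
      · push_cast
        rw [add_sub_right_comm, mul_add, mul_one, Real.exp_add, mul_right_comm, mul_comm _ (rexp a)]
        exact (mul_le_mul_of_nonneg_left ih (Real.exp_nonneg a)).trans (not_le.1 hgood).le
  have hexp := Real.exp_le_exp.1 (le_of_mul_le_mul_right ((hgrowth J le_rfl).trans hJ) h0)
  nlinarith

section Paraboloid

variable {V : Type*} [NormedAddCommGroup V] {ω r : ℝ} {p x : V}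

/-- The paraboloid `2 - ω² |x - p|²`. On the ball of radius `ω⁻¹` about `p` it lies between `1` and
`2`, and in dimension at least two it is a strict supersolution of `Δ u + ω² u = 0`. -/
def paraboloid (ω : ℝ) (p x : V) : ℝ := 2 - ω ^ 2 * ‖x - p‖ ^ 2

lemma paraboloid_le_two : paraboloid ω p x ≤ 2 := by
  have : 0 ≤ ω ^ 2 * ‖x - p‖ ^ 2 := by positivity
  rw [paraboloid]
  linarith

lemma one_le_paraboloid (hω : 0 ≤ ω) (hωr : ω * r ≤ 1) (hx : x ∈ closedBall p r) :
    1 ≤ paraboloid ω p x := by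
  have hle : ω * ‖x - p‖ ≤ 1 :=
    (mul_le_mul_of_nonneg_left (mem_closedBall_iff_norm.1 hx) hω).trans hωr
  have := pow_le_one₀ (by positivity) hle (n := 2)
  rw [mul_pow] at this
  rw [paraboloid]
  linarith

variable [InnerProductSpace ℝ V]

lemma contDiff_paraboloid : ContDiff ℝ 2 (paraboloid ω p) :=
  contDiff_const.sub (contDiff_const.mul (contDiff_norm_sub_sq p))

variable [FiniteDimensional ℝ V]

lemma laplacian_paraboloid : Δ (paraboloid ω p) x = -(2 * finrank ℝ V * ω ^ 2) := by
  have hderiv : deriv (fun u : ℝ => 2 - ω ^ 2 * u) = fun _ => -ω ^ 2 := by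
    ext u
    simp [deriv_const_sub]
  have := laplacian_comp_norm_sub_sq (g := fun u => 2 - ω ^ 2 * u) (x := x) (y := p)
    (by fun_prop)
  simp only [hderiv, deriv_const] at this
  exact this.trans (by ring)

lemma IsSphericalExpSum.norm_sub_eq_of_neg_le_mul_paraboloid {ψ : V → ℝ}
    (h : IsSphericalExpSum ω ψ) (hV : 1 < finrank ℝ V) (hω : 0 < ω) {c : ℝ} (hc : 0 < c)
    (hx : x ∈ closedBall p r) (heq : -ψ x = c * paraboloid ω p x)
    (hle : ∀ y ∈ closedBall p r, -ψ y ≤ c * paraboloid ω p y) : ‖x - p‖ = r := by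
  refine (mem_closedBall_iff_norm.1 hx).eq_of_not_lt fun hlt => ?_
  have hmax : IsLocalMax (-ψ - c • paraboloid ω p) x := by
    filter_upwards [isOpen_ball.mem_nhds (mem_ball_iff_norm.2 hlt)] with y hy
    have := hle y (ball_subset_closedBall hy)
    simp only [Pi.sub_apply, Pi.neg_apply, Pi.smul_apply, smul_eq_mul]
    linarith
  have hψ : ContDiffAt ℝ 2 (-ψ) x := h.neg.contDiff.contDiffAt
  have hq : ContDiffAt ℝ 2 (c • paraboloid ω p) x :=
    (contDiff_const.smul contDiff_paraboloid).contDiffAt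
  have hnonpos : Δ (-ψ - c • paraboloid ω p) x ≤ 0 :=
    laplacian_nonpos_of_isLocalMax (hψ.sub hq) hmax
  have hneg : Δ (-ψ) x = -ω ^ 2 * -ψ x := h.neg.laplacian x
  rw [hψ.laplacian_sub hq, laplacian_smul c contDiff_paraboloid.contDiffAt, smul_eq_mul,
    laplacian_paraboloid, hneg, heq] at hnonpos
  have hn : (1 : ℝ) < finrank ℝ V := mod_cast hV
  have hpos : 0 < c * ω ^ 2 * (2 * finrank ℝ V - paraboloid ω p x) := by
    have := paraboloid_le_two (ω := ω) (p := p) (x := x)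
    exact mul_pos (by positivity) (by linarith)
  linarith

end Paraboloid

variable {V : Type*} [NormedAddCommGroup V] [InnerProductSpace ℝ V] [FiniteDimensional ℝ V]
variable {ψ : V → ℝ} {K₁ K₂ ω r : ℝ} {p x : V}

/-- The best constant `c` in the inequality `-ψ ≤ c * paraboloid ω p` on the closed ball of radius
`r` about `p`. It measures the growth of the negative part of `ψ` away from `p`. -/
def negGrowth (ω : ℝ) (ψ : V → ℝ) (p : V) (r : ℝ) : ℝ :=
  sSup ((fun x => -ψ x / paraboloid ω p x) '' closedBall p r)

section NegGrowth

variable (hψ : Continuous ψ) (hω : 0 ≤ ω) (hωr : ω * r ≤ 1)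

include hψ hω hωr

lemma isCompact_image_div_paraboloid :
    IsCompact ((fun x => -ψ x / paraboloid ω p x) '' closedBall p r) :=
  (isCompact_closedBall p r).image_of_continuousOn <|
    hψ.neg.continuousOn.div contDiff_paraboloid.continuous.continuousOn fun _ hx =>
      (one_pos.trans_le (one_le_paraboloid hω hωr hx)).ne'

lemma neg_le_negGrowth_mul (hx : x ∈ closedBall p r) :
    -ψ x ≤ negGrowth ω ψ p r * paraboloid ω p x :=
  (div_le_iff₀ (one_pos.trans_le (one_le_paraboloid hω hωr hx))).1 <|
    le_csSup (isCompact_image_div_paraboloid hψ hω hωr).bddAbove (Set.mem_image_of_mem _ hx)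

lemma exists_mem_closedBall_neg_eq_negGrowth_mul (hr : 0 ≤ r) :
    ∃ x ∈ closedBall p r, -ψ x = negGrowth ω ψ p r * paraboloid ω p x := by
  obtain ⟨x, hx, hxr⟩ := (isCompact_image_div_paraboloid hψ hω hωr).sSup_mem
    ((nonempty_closedBall.2 hr).image (fun x => -ψ x / paraboloid ω p x))
  exact ⟨x, hx, (div_eq_iff (one_pos.trans_le (one_le_paraboloid hω hωr hx)).ne').1 hxr⟩

lemma negGrowth_mono {s : ℝ} (hs : 0 ≤ s) (hsr : s ≤ r) :
    negGrowth ω ψ p s ≤ negGrowth ω ψ p r :=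
  csSup_le_csSup (isCompact_image_div_paraboloid hψ hω hωr).bddAbove
    ((nonempty_closedBall.2 hs).image _) (Set.image_mono (closedBall_subset_closedBall hsr))

lemma negGrowth_nonneg_of_eq_zero (hr : 0 ≤ r) (hp : ψ p = 0) : 0 ≤ negGrowth ω ψ p r := by
  simpa [paraboloid, hp] using neg_le_negGrowth_mul hψ hω hωr (mem_closedBall_self hr (x := p))

end NegGrowth

variable [MeasurableSpace V] [BorelSpace V]

lemma exists_forall_ball_neg (L : ℝ) : ∃ c, 0 < c ∧ c ≤ 1 ∧
    ∀ {ψ : V → ℝ} {ω : ℝ}, IsSphericalExpSum ω ψ → 0 ≤ ω →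
      ∀ {p : V} {r m : ℝ}, 0 < r → ω * r ≤ 1 → 0 < m → ψ p ≤ -m →
        (∀ x ∈ ball p r, -ψ x ≤ L * m) → ∀ x ∈ ball p (c * r), ψ x < 0 := by
  have hcont : Continuous fun c : ℝ => (1 + c) ^ finrank ℝ V * (L - 1 / 2) := by fun_prop
  have hsmall : ∀ᶠ c in 𝓝[>] (0 : ℝ), (1 + c) ^ finrank ℝ V * (L - 1 / 2) < L :=
    (hcont.continuousWithinAt (x := 0)).eventually_lt_const (by norm_num)
  obtain ⟨c, hcL, hc0, hc1⟩ := (hsmall.and (Ioc_mem_nhdsGT one_pos)).exists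
  refine ⟨c / 2, half_pos hc0, by linarith, fun {ψ ω} h hω p r m hr hωr hm hp hle x hx => ?_⟩
  set s := r / 2 with hs
  have hs0 : 0 < s := half_pos hr
  have hsr : s * (1 + c) ≤ r := by rw [hs]; nlinarith
  have hsub : ball x s ⊆ ball p (s * (1 + c)) := by
    refine ball_subset_ball' ?_
    have := mem_ball.1 hx
    have : c / 2 * r = s * c := by rw [hs]; ring
    linarith
  obtain ⟨A, hA, hmeanx⟩ := h.exists_setAverage_ball_eq hs0
    ((mul_le_mul_of_nonneg_left (by linarith) hω).trans hωr)
  obtain ⟨B, hB, hmeanp⟩ := h.exists_setAverage_ball_eq (r := s * (1 + c)) (by positivity)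
    ((mul_le_mul_of_nonneg_left hsr hω).trans hωr)
  have hmono := setAverage_ball_le_mul (f := fun y => ψ y + L * m)
    (h.continuous.add continuous_const) (fun y hy => by linarith [hle y (ball_subset_ball hsr hy)])
    hs0 (by positivity) hsub
  rw [setAverage_ball_add_const h.continuous x hs0,
    setAverage_ball_add_const h.continuous p (by positivity), hmeanx, hmeanp,
    mul_div_cancel_left₀ _ hs0.ne'] at hmono
  have hBp : B * ψ p ≤ -(1 / 2) * m := by nlinarith
  have hneg : A * ψ x < 0 := by
    have : (1 + c) ^ finrank ℝ V * (B * ψ p + L * m) ≤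
        (1 + c) ^ finrank ℝ V * (L - 1 / 2) * m := by
      rw [mul_assoc]
      exact mul_le_mul_of_nonneg_left (by linarith) (by positivity)
    linarith [mul_lt_mul_of_pos_right hcL hm]
  exact neg_of_mul_neg_right hneg (by linarith)

lemma exists_ball_neg_of_negGrowth_le (hV : 1 < finrank ℝ V) (a : ℝ) : ∃ c, 0 < c ∧ c ≤ 1 ∧
    ∀ {ψ : V → ℝ} {ω : ℝ}, IsSphericalExpSum ω ψ → 0 < ω →
      ∀ {p : V} {r s : ℝ}, 0 ≤ r → 0 < s → ω * (r + s) ≤ 1 → 0 < negGrowth ω ψ p r →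
        negGrowth ω ψ p (r + s) ≤ rexp a * negGrowth ω ψ p r →
          ∃ x, ‖x - p‖ = r ∧ ∀ y ∈ ball x (c * s), ψ y < 0 := by
  obtain ⟨c, hc0, hc1, hneg⟩ := exists_forall_ball_neg (V := V) (2 * rexp a)
  refine ⟨c, hc0, hc1, fun {ψ ω} h hω p r s hr hs hωrs hpos hgood => ?_⟩
  have hωr : ω * r ≤ 1 := (mul_le_mul_of_nonneg_left (by linarith) hω.le).trans hωrs
  obtain ⟨x, hx, heq⟩ :=
    exists_mem_closedBall_neg_eq_negGrowth_mul h.continuous hω.le hωr hr (p := p)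
  have hxr : ‖x - p‖ = r := h.norm_sub_eq_of_neg_le_mul_paraboloid hV hω hpos hx heq
    fun y => neg_le_negGrowth_mul h.continuous hω.le hωr
  refine ⟨x, hxr, hneg h hω.le hs ?_ hpos ?_ fun y hy => ?_⟩
  · exact (mul_le_mul_of_nonneg_left (by linarith) hω.le).trans hωrs
  · have := le_mul_of_one_le_right hpos.le (one_le_paraboloid hω.le hωr hx)
    linarith
  · have hy' : y ∈ closedBall p (r + s) :=
      ball_subset_closedBall <| ball_subset_ball' (by rw [dist_eq_norm, hxr, add_comm]) hy
    have : 0 ≤ negGrowth ω ψ p (r + s) :=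
      hpos.le.trans (negGrowth_mono h.continuous hω.le hωrs hr (by linarith))
    calc -ψ y ≤ negGrowth ω ψ p (r + s) * paraboloid ω p y :=
          neg_le_negGrowth_mul h.continuous hω.le hωrs hy'
      _ ≤ rexp a * negGrowth ω ψ p r * 2 :=
          mul_le_mul hgood paraboloid_le_two
            (zero_le_one.trans (one_le_paraboloid hω.le hωrs hy')) (by positivity)
      _ = _ := by ring

lemma exists_negGrowth_two_mul_le (hK₁ : 0 < K₁) (hK₂ : 0 ≤ K₂) :
    ∃ C, 0 < C ∧ ∀ {ψ : V → ℝ} {ω R : ℝ}, IsEquidistributedWave K₁ K₂ ω R ψ →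
      ∀ {p : V} {r : ℝ}, 0 < r → ω * (2 * r) ≤ 1 → ψ p = 0 →
        0 < negGrowth ω ψ p r ∧
          negGrowth ω ψ p (2 * r) ≤ rexp (C * (ω * R)) * negGrowth ω ψ p r := by
  obtain ⟨C, hC, hgrowth⟩ := exists_abs_le_of_neg_le (V := V) hK₁ hK₂
  refine ⟨C + 1, by positivity, fun {ψ ω R} h p r hr hω2r hp => ?_⟩
  have hψ := h.isSphericalExpSum.continuous
  have hω := h.freq_pos.le
  have hωr : ω * r ≤ 1 := (mul_le_mul_of_nonneg_left (by linarith) hω).trans hω2r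
  have hnonneg := negGrowth_nonneg_of_eq_zero hψ hω hωr hr.le hp
  obtain ⟨hpos, habs⟩ := hgrowth h hr hωr hp (B := negGrowth ω ψ p r * 2) fun x hx =>
    (neg_le_negGrowth_mul hψ hω hωr (ball_subset_closedBall hx)).trans
      (mul_le_mul_of_nonneg_left paraboloid_le_two hnonneg)
  refine ⟨by linarith, ?_⟩
  obtain ⟨x, hx, heq⟩ :=
    exists_mem_closedBall_neg_eq_negGrowth_mul hψ hω hω2r (by positivity) (p := p)
  have htwo : 2 ≤ rexp (ω * R) := by linarith [Real.add_one_le_exp (ω * R), h.one_le_freq_mul]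
  calc negGrowth ω ψ p (2 * r) ≤ negGrowth ω ψ p (2 * r) * paraboloid ω p x :=
        le_mul_of_one_le_right (negGrowth_nonneg_of_eq_zero hψ hω hω2r (by positivity) hp)
          (one_le_paraboloid hω hω2r hx)
    _ ≤ |ψ x| := heq ▸ neg_le_abs _
    _ ≤ rexp (C * (ω * R)) * (negGrowth ω ψ p r * 2) := habs x hx
    _ ≤ rexp (C * (ω * R)) * (negGrowth ω ψ p r * rexp (ω * R)) := by gcongr
    _ = _ := by rw [add_mul, one_mul, Real.exp_add]; ring

theorem exists_finset_ball_neg (hV : 1 < finrank ℝ V) (hK₁ : 0 < K₁) (hK₂ : 0 ≤ K₂) :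
    ∃ c, 0 < c ∧ c ≤ 1 ∧ ∀ {ψ : V → ℝ} {ω R : ℝ}, IsEquidistributedWave K₁ K₂ ω R ψ →
      ∀ {p : V} {h : ℝ} {J : ℕ}, 0 < h → ω * (2 * h) ≤ 1 → ψ p = 0 → ω * R ≤ J →
        ∃ G ⊆ Finset.range J, (J : ℝ) / 2 ≤ G.card ∧
          ∀ k ∈ G, ∃ x, ‖x - p‖ = h * (1 + k / J) ∧ ∀ y ∈ ball x (c * (h / J)), ψ y < 0 := by
  obtain ⟨C, hC, hgrowth⟩ := exists_negGrowth_two_mul_le (V := V) hK₁ hK₂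
  obtain ⟨c, hc0, hc1, hneg⟩ := exists_ball_neg_of_negGrowth_le hV (2 * C)
  refine ⟨c, hc0, hc1, fun {ψ ω R} hwave p h J hh hωh hp hJ => ?_⟩
  have hψ := hwave.isSphericalExpSum
  have hω := hwave.freq_pos
  have hJ0 : (0 : ℝ) < J := one_pos.trans_le (hwave.one_le_freq_mul.trans hJ)
  set r : ℕ → ℝ := fun k => h * (1 + k / J) with hr
  have hr0 (k : ℕ) : 0 ≤ r k := by positivity
  have hrsucc (k : ℕ) : r (k + 1) = r k + h / J := by simp only [hr]; push_cast; field_simp; ring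
  have hωr (k : ℕ) (hk : k ≤ J) : ω * r k ≤ 1 := by
    have : (k : ℝ) / J ≤ 1 := (div_le_one hJ0).2 (mod_cast hk)
    exact (mul_le_mul_of_nonneg_left (by simp only [hr]; nlinarith) hω.le).trans hωh
  have hmono (k : ℕ) (hk : k < J) : negGrowth ω ψ p (r k) ≤ negGrowth ω ψ p (r (k + 1)) :=
    negGrowth_mono hψ.continuous hω.le (hωr _ hk) (hr0 k)
      (by rw [hrsucc]; exact le_add_of_nonneg_right (by positivity))
  obtain ⟨hpos, htop⟩ := hgrowth hwave hh hωh hp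
  rw [show h = r 0 by simp [hr], show 2 * r 0 = r J by simp [hr, hJ0.ne']; ring] at htop
  rw [show h = r 0 by simp [hr]] at hpos
  refine ⟨_, Finset.filter_subset _ _, half_le_card_filter_le_mul (by positivity : 0 < 2 * C) hpos
    hmono (htop.trans ?_), fun k hk => ?_⟩
  · refine mul_le_mul_of_nonneg_right (Real.exp_le_exp.2 ?_) hpos.le
    linarith [mul_le_mul_of_nonneg_left hJ hC.le]
  · rw [Finset.mem_filter, Finset.mem_range] at hk
    have hle0 : r 0 ≤ r k := by simp only [hr]; gcongr; simp
    have hposk := hpos.trans_le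
      (negGrowth_mono hψ.continuous hω.le (hωr k hk.1.le) (hr0 0) hle0)
    have hgood := hk.2
    rw [hrsucc] at hgood
    exact hneg hψ hω (hr0 k) (by positivity) (hrsucc k ▸ hωr _ hk.1) hposk hgood

end NegativeBalls

section Barrier

lemma sum_range_ite_inv_le_harmonic (J : ℕ) (ρ : ℝ) :
    ∑ k ∈ Finset.range J, (if ρ ≤ (k : ℝ) then (1 + (k - ρ))⁻¹ else 0) ≤ harmonic J := by
  induction J generalizing ρ with
  | zero => simp
  | succ J ih =>
    rcases le_or_gt ρ 0 with hρ | hρ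
    · rw [harmonic]
      push_cast
      refine Finset.sum_le_sum fun k _ => ?_
      have hk : (0 : ℝ) ≤ k := k.cast_nonneg
      rw [if_pos (hρ.trans hk)]
      exact inv_anti₀ (by positivity) (by linarith)
    · have hshift (k : ℕ) : (if ρ ≤ ((k + 1 : ℕ) : ℝ) then (1 + (((k + 1 : ℕ) : ℝ) - ρ))⁻¹ else 0) =
          if ρ - 1 ≤ (k : ℝ) then (1 + (k - (ρ - 1)))⁻¹ else 0 := by
        push_cast
        simp only [sub_le_iff_le_add, sub_sub_eq_add_sub]
      rw [Finset.sum_range_succ', Nat.cast_zero, if_neg hρ.not_ge, add_zero, harmonic_succ]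
      simp only [hshift]
      push_cast
      exact (ih (ρ - 1)).trans (le_add_of_nonneg_right (by positivity))

lemma sum_range_inv_one_add_abs_sub_le (J : ℕ) (ρ : ℝ) :
    ∑ k ∈ Finset.range J, (1 + |(k : ℝ) - ρ|)⁻¹ ≤ 2 * harmonic J := by
  have hreflect := sum_range_ite_inv_le_harmonic J (J - 1 - ρ)
  rw [← Finset.sum_range_reflect] at hreflect
  rw [two_mul]
  refine le_trans ?_ (add_le_add (sum_range_ite_inv_le_harmonic J ρ) hreflect)
  rw [← Finset.sum_add_distrib]
  refine Finset.sum_le_sum fun k hk => ?_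
  rw [Finset.mem_range] at hk
  rw [Nat.cast_sub (by omega), Nat.cast_sub (by omega), Nat.cast_one]
  have hnonneg (s t : ℝ) : 0 ≤ if s ≤ t then (1 + (t - s))⁻¹ else 0 := by
    split_ifs <;> [exact inv_nonneg.2 (by linarith); rfl]
  rcases le_total ρ k with h | h
  · rw [if_pos h, abs_of_nonneg (by linarith)]
    exact le_add_of_nonneg_right (hnonneg _ _)
  · rw [if_pos (by linarith : (J : ℝ) - 1 - ρ ≤ J - 1 - k), abs_of_nonpos (by linarith)]
    refine (le_of_eq ?_).trans (le_add_of_nonneg_left (hnonneg _ _))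
    congr 1
    ring

lemma harmonic_le_mul_rpow (J : ℕ) {s : ℝ} (hs : 0 < s) :
    harmonic J ≤ (1 + 1 / s) * (J : ℝ) ^ s := by
  rcases J.eq_zero_or_pos with rfl | hJ
  · simp [hs.ne']
  have hJ1 : (1 : ℝ) ≤ J := mod_cast hJ
  calc (harmonic J : ℝ) ≤ 1 + Real.log J := harmonic_le_one_add_log J
    _ ≤ (J : ℝ) ^ s + (J : ℝ) ^ s / s :=
        add_le_add (Real.one_le_rpow hJ1 hs.le) (Real.log_le_rpow_div J.cast_nonneg hs)
    _ = _ := by ring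

lemma inv_pow_le_mul_inv_one_add {a c s t : ℝ} {N : ℕ} (hN : N ≠ 0) (hs : 0 < s) (hc : 0 < c)
    (hc1 : c ≤ 1) (ht : 0 ≤ t) (hca : c * s ≤ a) (hta : s * t ≤ a) :
    (a ^ N)⁻¹ ≤ 2 / (c * s) ^ N * (1 + t)⁻¹ := by
  obtain ⟨m, rfl⟩ := Nat.exists_eq_add_one_of_ne_zero hN
  have ha : 0 < a := (mul_pos hc hs).trans_le hca
  have hlin : c * s * (1 + t) ≤ 2 * a := by
    linarith [mul_le_of_le_one_left (mul_nonneg hs.le ht) hc1]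
  have hpow : (c * s) ^ (m + 1) * (1 + t) ≤ 2 * a ^ (m + 1) :=
    calc (c * s) ^ (m + 1) * (1 + t) = (c * s) ^ m * (c * s * (1 + t)) := by ring
      _ ≤ a ^ m * (2 * a) := by gcongr
      _ = 2 * a ^ (m + 1) := by ring
  rw [← div_eq_mul_inv, div_div, inv_eq_one_div, div_le_div_iff₀ (by positivity) (by positivity)]
  linarith

variable {V : Type*} [NormedAddCommGroup V]

lemma sum_inv_pow_norm_sub_le {c h : ℝ} {J N : ℕ} {G : Finset ℕ} {x : ℕ → V} {p z : V}
    (hN : N ≠ 0) (hJ : 0 < J) (hh : 0 < h) (hc : 0 < c) (hc1 : c ≤ 1) (hG : G ⊆ Finset.range J)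
    (hx : ∀ k ∈ G, ‖x k - p‖ = h * (1 + k / J)) (hz : ∀ k ∈ G, c * (h / J) ≤ ‖z - x k‖) :
    ∑ k ∈ G, (‖z - x k‖ ^ N)⁻¹ ≤ 4 / (c * (h / J)) ^ N * harmonic J := by
  have hJ0 : (0 : ℝ) < J := mod_cast hJ
  set ρ := (‖z - p‖ / h - 1) * J with hρ
  have hdist : ∀ k ∈ G, h / J * |(k : ℝ) - ρ| ≤ ‖z - x k‖ := fun k hk => by
    have hnorm := abs_norm_sub_norm_le (x k - p) (z - p)
    rw [hx k hk, sub_sub_sub_cancel_right, norm_sub_rev (x k) z] at hnorm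
    rwa [← abs_of_pos (div_pos hh hJ0), ← abs_mul,
      show h / J * (k - ρ) = h * (1 + k / J) - ‖z - p‖ by rw [hρ]; field_simp; ring]
  calc ∑ k ∈ G, (‖z - x k‖ ^ N)⁻¹
      ≤ ∑ k ∈ G, 2 / (c * (h / J)) ^ N * (1 + |(k : ℝ) - ρ|)⁻¹ :=
        Finset.sum_le_sum fun k hk => inv_pow_le_mul_inv_one_add hN (by positivity) hc hc1
          (abs_nonneg _) (hz k hk) (hdist k hk)
    _ ≤ ∑ k ∈ Finset.range J, 2 / (c * (h / J)) ^ N * (1 + |(k : ℝ) - ρ|)⁻¹ :=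
        Finset.sum_le_sum_of_subset_of_nonneg hG fun k _ _ => by positivity
    _ ≤ 2 / (c * (h / J)) ^ N * (2 * harmonic J) := by
        rw [← Finset.mul_sum]
        gcongr
        exact sum_range_inv_one_add_abs_sub_le J ρ
    _ = _ := by ring

variable [InnerProductSpace ℝ V] {ι : Type*} {G : Finset ι} {x : ι → V} {y z : V}

/-- The Newtonian potential of unit charges at the points `x k`, `k ∈ G`. It is the harmonic
barrier which is compared with the eigenfunction inside a nodal domain. -/
def greenPotential (G : Finset ι) (x : ι → V) (y : V) : ℝ := ∑ k ∈ G, greenKernel (x k) y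

lemma greenKernel_eq_inv_pow (hV : 2 ≤ finrank ℝ V) (y x : V) :
    greenKernel y x = (‖x - y‖ ^ (finrank ℝ V - 2))⁻¹ := by
  rw [greenKernel, ← Real.rpow_natCast ‖x - y‖ 2, ← Real.rpow_mul (norm_nonneg _),
    ← Real.rpow_natCast, ← Real.rpow_neg (norm_nonneg _), Nat.cast_sub hV]
  congr 1
  push_cast
  ring

lemma contDiffAt_greenPotential (h : ∀ k ∈ G, y ≠ x k) : ContDiffAt ℝ 2 (greenPotential G x) y :=
  ContDiffAt.sum fun k hk => contDiffAt_greenKernel (h k hk)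

lemma card_mul_inv_pow_le_greenPotential {r : ℝ} (hV : 2 ≤ finrank ℝ V) (h : ∀ k ∈ G, y ≠ x k)
    (hr : ∀ k ∈ G, ‖y - x k‖ ≤ r) :
    G.card * (r ^ (finrank ℝ V - 2))⁻¹ ≤ greenPotential G x y := by
  rw [greenPotential, ← nsmul_eq_mul]
  refine Finset.card_nsmul_le_sum _ _ _ fun k hk => ?_
  have : 0 < ‖y - x k‖ := norm_pos_iff.2 (sub_ne_zero.2 (h k hk))
  rw [greenKernel_eq_inv_pow hV]
  exact inv_anti₀ (by positivity) (pow_le_pow_left₀ this.le (hr k hk) _)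

lemma greenPotential_le_half (hV : 3 ≤ finrank ℝ V) (h : ∀ k ∈ G, y ≠ x k)
    (hz : ∀ k ∈ G, 2 * ‖y - x k‖ ≤ ‖z - x k‖) :
    greenPotential G x z ≤ greenPotential G x y / 2 := by
  rw [greenPotential, greenPotential, Finset.sum_div]
  refine Finset.sum_le_sum fun k hk => ?_
  have hpos : 0 < ‖y - x k‖ := norm_pos_iff.2 (sub_ne_zero.2 (h k hk))
  rw [greenKernel_eq_inv_pow (by omega), greenKernel_eq_inv_pow (by omega), inv_eq_one_div (_ ^ _),
    inv_eq_one_div (_ ^ _), div_div]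
  refine one_div_le_one_div_of_le (by positivity) ?_
  calc ‖y - x k‖ ^ (finrank ℝ V - 2) * 2
      ≤ ‖y - x k‖ ^ (finrank ℝ V - 2) * 2 ^ (finrank ℝ V - 2) := by
        gcongr
        exact le_self_pow₀ one_le_two (by omega)
    _ = (2 * ‖y - x k‖) ^ (finrank ℝ V - 2) := by rw [mul_pow, mul_comm]
    _ ≤ _ := by gcongr; exact hz k hk

variable [FiniteDimensional ℝ V]

lemma laplacian_greenPotential (h : ∀ k ∈ G, y ≠ x k) : Δ (greenPotential G x) y = 0 :=
  (laplacian_finset_sum fun k hk => contDiffAt_greenKernel (h k hk)).trans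
    (Finset.sum_eq_zero fun k hk => laplacian_greenKernel (h k hk))

end Barrier

section PositivitySet

variable {X : Type*} [TopologicalSpace X] {ψ : X → ℝ} {Ω : Set X} {y : X}

/-- An open set on which `ψ` is positive and on whose boundary `ψ` vanishes, such as a nodal domain
of a continuous function. -/
structure IsPositivitySet (ψ : X → ℝ) (Ω : Set X) : Prop where
  isOpen : IsOpen Ω
  pos : ∀ y ∈ Ω, 0 < ψ y
  eq_zero : ∀ y ∈ frontier Ω, ψ y = 0

lemma IsPositivitySet.eq_zero_of_mem_closure (hΩ : IsPositivitySet ψ Ω) (hy : y ∈ closure Ω)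
    (hyΩ : y ∉ Ω) : ψ y = 0 :=
  hΩ.eq_zero y (hΩ.isOpen.frontier_eq ▸ ⟨hy, hyΩ⟩)

lemma IsPositivitySet.nonneg (hΩ : IsPositivitySet ψ Ω) (hy : y ∈ closure Ω) : 0 ≤ ψ y := by
  by_cases hyΩ : y ∈ Ω
  · exact (hΩ.pos y hyΩ).le
  · exact (hΩ.eq_zero_of_mem_closure hy hyΩ).ge

end PositivitySet

section KeyEstimate

variable {V : Type*} [NormedAddCommGroup V] [InnerProductSpace ℝ V] [FiniteDimensional ℝ V]
variable {ψ : V → ℝ} {Ω : Set V} {x₀ : V} {ω h M : ℝ} {ι : Type*} {G : Finset ι} {x : ι → V}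

lemma exists_le_of_laplacian_pos {f : V → ℝ} {r : ℝ} (hΩ : IsOpen Ω) (hx₀ : x₀ ∈ Ω) (hr : 0 ≤ r)
    (hf : ∀ y ∈ closure Ω, ContDiffAt ℝ 2 f y) (hΔ : ∀ y ∈ Ω, 0 < Δ f y) :
    ∃ z ∈ closure Ω ∩ closedBall x₀ r, f x₀ ≤ f z ∧ (z ∈ Ω → ‖z - x₀‖ = r) := by
  have hx₀' : x₀ ∈ closure Ω ∩ closedBall x₀ r := ⟨subset_closure hx₀, mem_closedBall_self hr⟩
  obtain ⟨z, hz, hmax⟩ := ((isCompact_closedBall x₀ r).inter_left isClosed_closure).exists_isMaxOn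
    ⟨x₀, hx₀'⟩ fun y hy => (hf y hy.1).continuousAt.continuousWithinAt
  refine ⟨z, hz, hmax hx₀', fun hzΩ => (mem_closedBall_iff_norm.1 hz.2).eq_of_not_lt fun hlt => ?_⟩
  have hloc : IsLocalMax f z := by
    filter_upwards [hΩ.mem_nhds hzΩ, isOpen_ball.mem_nhds (mem_ball_iff_norm.2 hlt)] with y hyΩ hyr
    exact hmax ⟨subset_closure hyΩ, ball_subset_closedBall hyr⟩
  exact (hΔ z hzΩ).not_ge (laplacian_nonpos_of_isLocalMax (hf z hz.1) hloc)

lemma IsSphericalExpSum.exists_le_add_greenPotential (hψ : IsSphericalExpSum ω ψ) (hω : 0 < ω)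
    (hV : 0 < finrank ℝ V) (hΩ : IsOpen Ω) (hx₀ : x₀ ∈ Ω) (hM : 0 < M) (hle : ∀ y ∈ Ω, ψ y ≤ M)
    (hx : ∀ k ∈ G, x k ∉ closure Ω) (κ : ℝ) {r : ℝ} (hr : 0 ≤ r) :
    ∃ z ∈ closure Ω, ψ x₀ + κ * greenPotential G x x₀ ≤
      ψ z + κ * greenPotential G x z + (ω * r) ^ 2 * M ∧ (z ∈ Ω → ‖z - x₀‖ = r) := by
  have hne {y : V} (hy : y ∈ closure Ω) (k : ι) (hk : k ∈ G) : y ≠ x k :=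
    fun h => hx k hk (h ▸ hy)
  have hψ2 (y : V) : ContDiffAt ℝ 2 ψ y := hψ.contDiff.contDiffAt
  have hpot {y : V} (hy : y ∈ closure Ω) : ContDiffAt ℝ 2 (κ • greenPotential G x) y :=
    contDiffAt_const.smul (contDiffAt_greenPotential (hne hy))
  have hsum {y : V} (hy : y ∈ closure Ω) : ContDiffAt ℝ 2 (ψ + κ • greenPotential G x) y :=
    (hψ2 y).add (hpot hy)
  have hsq (y : V) : ContDiffAt ℝ 2 ((ω ^ 2 * M) • fun z => ‖z - x₀‖ ^ 2) y :=
    contDiffAt_const.smul (contDiff_norm_sub_sq x₀).contDiffAt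
  obtain ⟨z, ⟨hzΩ, hzr⟩, hmax, hz⟩ := exists_le_of_laplacian_pos (r := r)
    (f := ψ + κ • greenPotential G x + (ω ^ 2 * M) • fun z => ‖z - x₀‖ ^ 2) hΩ hx₀ hr
    (fun y hy => (hsum hy).add (hsq y)) fun y hy => by
      have hy' := subset_closure hy
      rw [(hsum hy').laplacian_add (hsq y), (hψ2 y).laplacian_add (hpot hy'),
        laplacian_smul _ (contDiffAt_greenPotential (hne hy')),
        laplacian_smul _ (contDiff_norm_sub_sq x₀).contDiffAt, hψ.laplacian,
        laplacian_greenPotential (hne hy'), laplacian_norm_sub_sq]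
      have hn : (1 : ℝ) ≤ finrank ℝ V := mod_cast hV
      have hpos : 0 < ω ^ 2 * (2 * M * finrank ℝ V - ψ y) := by
        have := hle y hy
        exact mul_pos (by positivity) (by nlinarith)
      simp only [smul_eq_mul]
      linarith
  refine ⟨z, hzΩ, ?_, hz⟩
  simp only [Pi.add_apply, Pi.smul_apply, smul_eq_mul, sub_self, norm_zero] at hmax
  have hzr' : ω ^ 2 * M * ‖z - x₀‖ ^ 2 ≤ ω ^ 2 * M * r ^ 2 := by
    gcongr
    exact mem_closedBall_iff_norm.1 hzr
  linarith

lemma IsPositivitySet.greenPotential_lt (hΩ : IsPositivitySet ψ Ω) (hψ : IsSphericalExpSum ω ψ)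
    (hω : 0 < ω) (hV : 3 ≤ finrank ℝ V) (hh : 0 < h) (hωh : ω * (20 * h) ≤ 1)
    (hle : ∀ y ∈ Ω, ψ y ≤ M) (hx₀ : x₀ ∈ Ω) (hx₀M : M - (ω * h) ^ 2 * M < ψ x₀)
    (hxΩ : ∀ k ∈ G, x k ∉ closure Ω) (hx : ∀ k ∈ G, ‖x k - x₀‖ ≤ 3 * h) {S : ℝ} (hS : 0 < S)
    (hpot : ∀ y ∈ closure Ω, greenPotential G x y ≤ S) :
    greenPotential G x x₀ < 328 * (ω * h) ^ 2 * S := by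
  have hM : 0 < M := (hΩ.pos x₀ hx₀).trans_le (hle x₀ hx₀)
  have hsmall : (ω * h) ^ 2 * M ≤ 1 / 400 * M := by
    have : ω * h ≤ 1 / 20 := by linarith
    have := pow_le_pow_left₀ (by positivity) this 2
    gcongr
    linarith
  have hne (k : ι) (hk : k ∈ G) : x₀ ≠ x k := fun h => hxΩ k hk (h ▸ subset_closure hx₀)
  -- The charge `M / (2 * S)` keeps the potential below `M / 2`, so the maximum lies inside `Ω`.
  obtain ⟨z, hzΩ, hz, hsphere⟩ := hψ.exists_le_add_greenPotential hω (by omega) hΩ.isOpen hx₀ hM hle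
    hxΩ (M / (2 * S)) (by positivity : 0 ≤ 9 * h)
  have hκ {y : V} (hy : y ∈ closure Ω) : M / (2 * S) * greenPotential G x y ≤ M / 2 := by
    rw [div_mul_eq_mul_div, div_le_div_iff₀ (by positivity) two_pos]
    nlinarith [hpot y hy]
  have hκ0 : 0 ≤ M / (2 * S) * greenPotential G x x₀ := by
    have := card_mul_inv_pow_le_greenPotential (by omega) hne
      fun k hk => (norm_sub_rev _ _).trans_le (hx k hk)
    exact mul_nonneg (by positivity) (le_trans (by positivity) this)
  have hzin : z ∈ Ω := by
    by_contra hzout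
    have := hΩ.eq_zero_of_mem_closure hzΩ hzout
    have := hκ hzΩ
    linarith
  have hhalf : greenPotential G x z ≤ greenPotential G x x₀ / 2 :=
    greenPotential_le_half hV hne fun k hk => by
      have := hsphere hzin
      have := norm_sub_le_norm_sub_add_norm_sub z (x k) x₀
      rw [norm_sub_rev x₀]
      linarith [hx k hk]
  have hlt : M / (2 * S) * greenPotential G x x₀ < 164 * (ω * h) ^ 2 * M := by
    have := mul_le_mul_of_nonneg_left hhalf (by positivity : 0 ≤ M / (2 * S))
    linarith [hle z hzin]
  rw [div_mul_eq_mul_div, div_lt_iff₀ (by positivity)] at hlt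
  exact lt_of_mul_lt_mul_left (by linarith) hM.le

lemma rpow_neg_mul_rpow_mul_pow {t : ℝ} (ht : 0 < t) {n : ℕ} (hn : 2 ≤ n) :
    t ^ (-(((n : ℝ) - 1) * (n - 2) / n)) * (t ^ (2 / n : ℝ) * t ^ (n - 2)) = t := by
  rw [← Real.rpow_natCast, ← Real.rpow_add ht, ← Real.rpow_add ht, Nat.cast_sub hn]
  have : (n : ℝ) ≠ 0 := by positivity
  convert Real.rpow_one t using 2
  push_cast
  field_simp
  ring

lemma rpow_neg_lt_of_card_mul_lt {J n : ℕ} (hJ : 0 < J) (hn : 2 ≤ n) {c h δ : ℝ} (hc : 0 < c)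
    (hh : 0 < h) (hδ : 0 ≤ δ) (hlt : (J : ℝ) / 2 * ((3 * h) ^ (n - 2))⁻¹ <
      328 * δ * (4 / (c * (h / J)) ^ (n - 2) * harmonic J)) :
    (J : ℝ) ^ (-(((n : ℝ) - 1) * (n - 2) / n)) < 2624 * (1 + n / 2) * (3 / c) ^ (n - 2) * δ := by
  have hJ0 : (0 : ℝ) < J := mod_cast hJ
  have : (0 : ℝ) < n := by positivity
  have hharm := harmonic_le_mul_rpow J (by positivity : (0 : ℝ) < 2 / n)
  rw [one_div_div] at hharm
  have hpow : 0 < (J : ℝ) ^ (2 / n : ℝ) * (J : ℝ) ^ (n - 2) := by positivity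
  refine lt_of_mul_lt_mul_right ?_ hpow.le
  rw [rpow_neg_mul_rpow_mul_pow hJ0 hn]
  calc (J : ℝ) = J / 2 * ((3 * h) ^ (n - 2))⁻¹ * (2 * (3 * h) ^ (n - 2)) := by field_simp
    _ < 328 * δ * (4 / (c * (h / J)) ^ (n - 2) * harmonic J) * (2 * (3 * h) ^ (n - 2)) := by
        gcongr
    _ ≤ 328 * δ * (4 / (c * (h / J)) ^ (n - 2) * ((1 + n / 2) * (J : ℝ) ^ (2 / n : ℝ))) *
          (2 * (3 * h) ^ (n - 2)) := by gcongr
    _ = _ := by simp only [div_pow, mul_pow]; field_simp; ring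

lemma exists_forall_le_and_sub_mul_lt {α : Type*} {f : α → ℝ} {s : Set α} {B δ : ℝ}
    (hs : s.Nonempty) (hpos : ∀ y ∈ s, 0 < f y) (hB : ∀ y ∈ s, f y ≤ B) (hδ : 0 < δ) :
    ∃ M, (∀ y ∈ s, f y ≤ M) ∧ ∃ x ∈ s, M - δ * M < f x := by
  have hle : ∀ y ∈ s, f y ≤ sSup (f '' s) := fun y hy =>
    le_csSup ⟨B, Set.forall_mem_image.2 hB⟩ (Set.mem_image_of_mem f hy)
  obtain ⟨x, hx⟩ := hs
  have hM : 0 < sSup (f '' s) := (hpos x hx).trans_le (hle x hx)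
  obtain ⟨_, ⟨x₀, hx₀, rfl⟩, hlt⟩ :=
    exists_lt_of_lt_csSup ⟨_, Set.mem_image_of_mem f hx⟩ (sub_lt_self _ (mul_pos hδ hM))
  exact ⟨_, hle, x₀, hx₀, hlt⟩

variable [MeasurableSpace V] [BorelSpace V] {K₁ K₂ : ℝ}

theorem exists_rpow_neg_lt (hV : 3 ≤ finrank ℝ V) (hK₁ : 0 < K₁) (hK₂ : 0 ≤ K₂) :
    ∃ C, 0 < C ∧ ∀ {ψ : V → ℝ} {ω R : ℝ}, IsEquidistributedWave K₁ K₂ ω R ψ →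
      ∀ {Ω : Set V} {h : ℝ} {J : ℕ}, IsPositivitySet ψ Ω → Ω.Nonempty → 0 < h →
        ω * (20 * h) ≤ 1 → ω * R ≤ J → (∀ y ∈ Ω, ∃ p ∈ ball y h, ψ p = 0) →
          (J : ℝ) ^ (-(((finrank ℝ V : ℝ) - 1) * (finrank ℝ V - 2) / finrank ℝ V)) <
            C * (ω * h) ^ 2 := by
  obtain ⟨c, hc0, hc1, hballs⟩ := exists_finset_ball_neg (V := V) (by omega) hK₁ hK₂
  refine ⟨2624 * (1 + finrank ℝ V / 2) * (3 / c) ^ (finrank ℝ V - 2), by positivity, ?_⟩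
  intro ψ ω R hwave Ω h J hΩ hne hh hωh hJ hzero
  have hω := hwave.freq_pos
  have hJ0 : 0 < J := by exact_mod_cast one_pos.trans_le (hwave.one_le_freq_mul.trans hJ)
  obtain ⟨B, hB⟩ := hwave.isSphericalExpSum.exists_abs_le
  obtain ⟨M, hM, x₀, hx₀, hx₀M⟩ := exists_forall_le_and_sub_mul_lt hne hΩ.pos
    (fun y _ => (le_abs_self _).trans (hB y)) (by positivity : 0 < (ω * h) ^ 2)
  obtain ⟨p, hp, hp0⟩ := hzero x₀ hx₀
  obtain ⟨G, hG, hcard, hx⟩ := hballs hwave hh (by linarith) hp0 hJ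
  choose! x hxp hneg using hx
  have hfar : ∀ y ∈ closure Ω, ∀ k ∈ G, c * (h / J) ≤ ‖y - x k‖ := fun y hy k hk => by
    by_contra! hlt
    exact (hneg k hk y (mem_ball_iff_norm.2 hlt)).not_ge (hΩ.nonneg hy)
  have hr : 0 < c * (h / J) := by positivity
  have hxΩ : ∀ k ∈ G, x k ∉ closure Ω := fun k hk hmem =>
    (hr.trans_le (hfar _ hmem k hk)).ne' (by simp)
  have hnear : ∀ k ∈ G, ‖x k - x₀‖ ≤ 3 * h := fun k hk => by
    have hkJ : (k : ℝ) / J ≤ 1 :=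
      div_le_one_of_le₀ (mod_cast (Finset.mem_range.1 (hG hk)).le) J.cast_nonneg
    have := norm_sub_le_norm_sub_add_norm_sub (x k) p x₀
    rw [hxp k hk, norm_sub_rev p] at this
    have := mem_ball_iff_norm'.1 hp
    nlinarith
  have hharm : (0 : ℝ) < harmonic J := mod_cast harmonic_pos hJ0.ne'
  have hupper := hΩ.greenPotential_lt hwave.isSphericalExpSum hω hV hh hωh hM hx₀ hx₀M hxΩ hnear
    (S := 4 / (c * (h / J)) ^ (finrank ℝ V - 2) * harmonic J) (by positivity) fun y hy => by
      simp only [greenPotential, greenKernel_eq_inv_pow (by omega : 2 ≤ finrank ℝ V)]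
      exact sum_inv_pow_norm_sub_le (by omega) hJ0 hh hc0 hc1 hG hxp (hfar y hy)
  have hlower := card_mul_inv_pow_le_greenPotential (x := x) (G := G) (y := x₀) (by omega)
    (fun k hk heq => hxΩ k hk (heq ▸ subset_closure hx₀))
    fun k hk => (norm_sub_rev _ _).trans_le (hnear k hk)
  refine rpow_neg_lt_of_card_mul_lt hJ0 (by omega) hc0 hh (by positivity) ?_
  exact (mul_le_mul_of_nonneg_right hcard (by positivity)).trans_lt (hlower.trans_lt hupper)

end KeyEstimate

section NodalDomains

lemma isPositivitySet_connectedComponentIn {X : Type*} [TopologicalSpace X]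
    [LocallyConnectedSpace X] {ψ : X → ℝ} (hc : Continuous ψ) {x : X} (hx : 0 < ψ x) :
    IsPositivitySet ψ (connectedComponentIn {y | ψ y ≠ 0} x) := by
  have hopen : ∀ z, IsOpen (connectedComponentIn {y | ψ y ≠ 0} z) := fun z =>
    (isOpen_ne_fun hc continuous_const).connectedComponentIn
  refine ⟨hopen x, fun y hy => ?_, fun z hz => ?_⟩
  · by_contra! hneg
    obtain ⟨u, hu, hu0⟩ := isPreconnected_connectedComponentIn.intermediate_value hy
      (mem_connectedComponentIn hx.ne') hc.continuousOn ⟨hneg, hx.le⟩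
    exact connectedComponentIn_subset _ _ hu hu0
  · by_contra hz0
    have hzmem : z ∈ connectedComponentIn {y | ψ y ≠ 0} z := mem_connectedComponentIn hz0
    obtain ⟨u, huz, hux⟩ := mem_closure_iff.1 hz.1 _ (hopen z) hzmem
    rw [(connectedComponentIn_eq huz).trans (connectedComponentIn_eq hux).symm] at hzmem
    exact hz.2 ((hopen x).interior_eq.symm ▸ hzmem)

lemma exists_eq_zero_mem_ball_of_not_subset {V : Type*} [NormedAddCommGroup V] [NormedSpace ℝ V]
    {ψ : V → ℝ} {x y : V} {r : ℝ} (hr : 0 < r) (hy : y ∈ connectedComponentIn {z | ψ z ≠ 0} x)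
    (h : ¬ ball y r ⊆ connectedComponentIn {z | ψ z ≠ 0} x) : ∃ p ∈ ball y r, ψ p = 0 := by
  by_contra! hne
  rw [connectedComponentIn_eq hy] at h
  exact h ((convex_ball y r).isPreconnected.subset_connectedComponentIn (mem_ball_self hr) hne)

lemma two_rpow_neg_mul_rpow_neg_le_natCeil_rpow_neg {β E : ℝ} (hβ : 1 ≤ β) (hE : 0 ≤ E) :
    (2 : ℝ) ^ (-E) * β ^ (-E) ≤ (⌈β⌉₊ : ℝ) ^ (-E) := by
  have hβ0 : 0 < β := one_pos.trans_le hβ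
  rw [← Real.mul_rpow zero_le_two hβ0.le]
  refine Real.rpow_le_rpow_of_nonpos (mod_cast Nat.ceil_pos.2 hβ0) ?_ (neg_nonpos.2 hE)
  linarith [Nat.ceil_lt_add_one hβ0.le]

variable {V : Type*} [NormedAddCommGroup V] [InnerProductSpace ℝ V] [FiniteDimensional ℝ V]
variable [MeasurableSpace V] [BorelSpace V] {K₁ K₂ : ℝ}

theorem exists_ball_subset_connectedComponentIn (hV : 3 ≤ finrank ℝ V) (hK₁ : 0 < K₁)
    (hK₂ : 0 ≤ K₂) :
    ∃ a, 0 < a ∧ ∀ {ψ : V → ℝ} {ω R : ℝ}, IsEquidistributedWave K₁ K₂ ω R ψ → ∀ {x : V}, 0 < ψ x →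
      ∃ y, ball y (a * (ω⁻¹ *
        (ω * R) ^ (-((((finrank ℝ V : ℝ) - 1) * (finrank ℝ V - 2) / finrank ℝ V) / 2)))) ⊆
          connectedComponentIn {z | ψ z ≠ 0} x := by
  obtain ⟨C, hC, hkey⟩ := exists_rpow_neg_lt hV hK₁ hK₂
  set E := ((finrank ℝ V : ℝ) - 1) * (finrank ℝ V - 2) / finrank ℝ V
  have hE : 0 ≤ E := by
    have : (3 : ℝ) ≤ finrank ℝ V := mod_cast hV
    exact div_nonneg (mul_nonneg (by linarith) (by linarith)) (by linarith)
  set a := min (1 / 20) (2 ^ (-E) / C)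
  have ha : 0 < a := by positivity
  have ha20 : a ≤ 1 / 20 := min_le_left _ _
  have haC : C * a ≤ 2 ^ (-E) := (le_div_iff₀' hC).1 (min_le_right _ _)
  refine ⟨a, ha, fun {ψ ω R} hwave {x} hx => ?_⟩
  have hω := hwave.freq_pos
  have hβ := hwave.one_le_freq_mul
  have hβ0 : 0 < ω * R := one_pos.trans_le hβ
  have hβE : (ω * R) ^ (-(E / 2)) ≤ 1 := Real.rpow_le_one_of_one_le_of_nonpos hβ (by linarith)
  set h := a * (ω⁻¹ * (ω * R) ^ (-(E / 2)))
  have hh : 0 < h := by positivity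
  have hωh : ω * h = a * (ω * R) ^ (-(E / 2)) := by simp only [h]; field_simp
  have hωh_sq : (ω * h) ^ 2 = a ^ 2 * (ω * R) ^ (-E) := by
    rw [hωh, mul_pow, ← Real.rpow_mul_natCast hβ0.le]
    congr 2
    push_cast
    ring
  by_contra! hsub
  have hΩ := isPositivitySet_connectedComponentIn hwave.isSphericalExpSum.continuous hx
  have hlt := hkey hwave hΩ ⟨x, mem_connectedComponentIn hx.ne'⟩ hh (by nlinarith)
    (Nat.le_ceil (ω * R)) fun y hy => exists_eq_zero_mem_ball_of_not_subset hh hy (hsub y)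
  have hlt' : (2 : ℝ) ^ (-E) * (ω * R) ^ (-E) < C * a ^ 2 * (ω * R) ^ (-E) := by
    rw [mul_assoc, ← hωh_sq]
    exact (two_rpow_neg_mul_rpow_neg_le_natCeil_rpow_neg hβ hE).trans_lt hlt
  have hlt_a := lt_of_mul_lt_mul_right hlt' (by positivity)
  nlinarith [mul_pos hC ha]

end NodalDomains

section InnerRadius

variable {n : ℕ} {ψ : EuclideanSpace ℝ (Fin n) → ℝ} {ω K₁ K₂ : ℝ}

lemma ZnPeriodic.exists_mem_closedBall_eq (h : ZnPeriodic n ψ) (y c : EuclideanSpace ℝ (Fin n)) :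
    ∃ z ∈ closedBall c n, ψ z = ψ y := by
  refine ⟨_, ?_, h y fun i => ⌊c i - y i⌋⟩
  rw [mem_closedBall, EuclideanSpace.dist_eq, Real.sqrt_le_left n.cast_nonneg]
  calc _ ≤ ∑ _i : Fin n, (1 : ℝ) := Finset.sum_le_sum fun i _ => by
        have := Int.floor_le (c i - y i)
        have := Int.lt_floor_add_one (c i - y i)
        refine pow_le_one₀ dist_nonneg ?_
        rw [Real.dist_eq, abs_le]
        constructor <;> linarith
    _ = n := by simp
    _ ≤ (n : ℝ) ^ 2 := mod_cast Nat.le_self_pow two_ne_zero n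

lemma ZnPeriodic.exists_nonpos (h : ZnPeriodic n ψ) (hψ : IsSphericalExpSum ω ψ) (hω : ω ≠ 0) :
    ∃ y, ψ y ≤ 0 := by
  obtain ⟨z, -, hz⟩ := (isCompact_closedBall (0 : EuclideanSpace ℝ (Fin n)) n).exists_isMinOn
    ⟨0, mem_closedBall_self n.cast_nonneg⟩ hψ.continuous.continuousOn
  have hmin : ∀ y, ψ z ≤ ψ y := fun y => by
    obtain ⟨y', hy', heq⟩ := h.exists_mem_closedBall_eq y 0
    exact heq ▸ hz hy'
  have hlap := laplacian_nonpos_of_isLocalMax hψ.neg.contDiff.contDiffAt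
    (.of_forall fun y => neg_le_neg (hmin y))
  rw [hψ.neg.laplacian] at hlap
  have : 0 < ω ^ 2 := by positivity
  exact ⟨z, by nlinarith⟩

lemma ZnPeriodic.bddAbove_setOf_ball_subset (h : ZnPeriodic n ψ) (hψ : IsSphericalExpSum ω ψ)
    (hω : ω ≠ 0) {Ω : Set (EuclideanSpace ℝ (Fin n))} (hpos : ∀ y ∈ Ω, 0 < ψ y) :
    BddAbove {ρ : ℝ | 0 < ρ ∧ ∃ c, ball c ρ ⊆ Ω} := by
  refine ⟨n, fun ρ ⟨_, c, hc⟩ => ?_⟩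
  by_contra! hρ
  obtain ⟨y, hy⟩ := h.exists_nonpos hψ hω
  obtain ⟨z, hz, heq⟩ := h.exists_mem_closedBall_eq y c
  exact (hpos z (hc (closedBall_subset_ball hρ hz))).not_ge (heq.trans_le hy)

lemma ZnPeriodic.neg (h : ZnPeriodic n ψ) : ZnPeriodic n fun x => -ψ x :=
  fun x v => congrArg Neg.neg (h x v)

theorem exists_mul_le_innerRadius (hn : 3 ≤ n) (hK₁ : 0 < K₁) (hK₂ : 0 ≤ K₂) :
    ∃ a, 0 < a ∧ ∀ {ψ : EuclideanSpace ℝ (Fin n) → ℝ} {ω R : ℝ}, ZnPeriodic n ψ →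
      IsEquidistributedWave K₁ K₂ ω R ψ → ∀ {Ω}, IsNodalDomain ψ Ω →
        a * (ω⁻¹ * (ω * R) ^ (-((((n : ℝ) - 1) * (n - 2) / n) / 2))) ≤ innerRadius Ω := by
  obtain ⟨a, ha, hball⟩ := exists_ball_subset_connectedComponentIn
    (V := EuclideanSpace ℝ (Fin n)) (by simpa using hn) hK₁ hK₂
  rw [finrank_euclideanSpace_fin] at hball
  refine ⟨a, ha, fun {ψ ω R} hper hwave {Ω} hΩ => ?_⟩
  obtain ⟨x, hx, rfl⟩ := hΩ
  wlog hpos : 0 < ψ x generalizing ψ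
  · simpa only [ne_eq, neg_eq_zero] using this hper.neg hwave.neg (neg_ne_zero.2 hx)
      (neg_pos.2 (lt_of_le_of_ne (not_lt.1 hpos) hx))
  have hω := hwave.freq_pos
  have hβ : 0 < ω * R := one_pos.trans_le hwave.one_le_freq_mul
  have hΩ := isPositivitySet_connectedComponentIn hwave.isSphericalExpSum.continuous hpos
  exact le_csSup (hper.bddAbove_setOf_ball_subset hwave.isSphericalExpSum hω.ne' hΩ.pos)
    ⟨by positivity, hball hwave hpos⟩

end InnerRadius

section EigenvalueScale

variable {lam : ℝ}

lemma sqrt_mul_rpow_neg_half_add (hlam : 0 < lam) (ε : ℝ) :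
    √lam * lam ^ (-(1 : ℝ) / 2 + ε) = lam ^ ε := by
  rw [Real.sqrt_eq_rpow, ← Real.rpow_add hlam]
  ring_nf

lemma inv_sqrt_mul_rpow_rpow (hlam : 0 < lam) (ε : ℝ) (n : ℕ) :
    (√lam)⁻¹ * (lam ^ ε) ^ (-((((n : ℝ) - 1) * (n - 2) / n) / 2)) =
      lam ^ (-(1 : ℝ) / 2 - ε * ((n : ℝ) - 1) * ((n : ℝ) - 2) / (2 * (n : ℝ))) := by
  rw [Real.sqrt_eq_rpow, ← Real.rpow_neg hlam.le, ← Real.rpow_mul hlam.le, ← Real.rpow_add hlam]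
  congr 1
  ring

lemma ZnPeriodic.isEquidistributedWave {n : ℕ} {ψ : EuclideanSpace ℝ (Fin n) → ℝ} {K₁ K₂ ε : ℝ}
    (h : ZnPeriodic n ψ) (hε : 0 ≤ ε) (hlam : 0 < lam) (hc : ContDiff ℝ 2 ψ)
    (hl : ∀ x, lap n ψ x = -lam * ψ x)
    (hmass : ∀ x : EuclideanSpace ℝ (Fin n),
      K₁ * (lam ^ (-(1 : ℝ) / 2 + ε)) ^ n ≤ ∫ y in ball x (lam ^ (-(1 : ℝ) / 2 + ε)), (ψ y) ^ 2 ∧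
        ∫ y in ball x (lam ^ (-(1 : ℝ) / 2 + ε)), (ψ y) ^ 2 ≤
          K₂ * (lam ^ (-(1 : ℝ) / 2 + ε)) ^ n)
    {x : EuclideanSpace ℝ (Fin n)} (hx : ψ x ≠ 0) :
    IsEquidistributedWave K₁ K₂ √lam (lam ^ (-(1 : ℝ) / 2 + ε)) ψ where
  isSphericalExpSum := h.isSphericalExpSum_of_lap_eq hc hl
  freq_pos := Real.sqrt_pos.2 hlam
  one_le_freq_mul := by
    rw [sqrt_mul_rpow_neg_half_add hlam]
    exact Real.one_le_rpow (h.one_le_of_lap_eq hc hl hlam.ne' hx) hε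
  le_mass x := by simpa only [finrank_euclideanSpace_fin] using (hmass x).1
  mass_le x := by simpa only [finrank_euclideanSpace_fin] using (hmass x).2

end EigenvalueScale

theorem inner_radius_lower_bound_epsilon_scale_general
    (n : ℕ) (hn : 3 ≤ n) (ε : ℝ) (hε : 0 ≤ ε) (K₁ K₂ : ℝ) (hK₁ : 0 < K₁) (hK₂ : 0 ≤ K₂) :
    ∃ a₁ : ℝ, 0 < a₁ ∧ ∀ (ψ : EuclideanSpace ℝ (Fin n) → ℝ) (lam : ℝ),
      0 < lam → ContDiff ℝ 2 ψ → ZnPeriodic n ψ → (∀ x, lap n ψ x = -lam * ψ x) →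
      (∀ x : EuclideanSpace ℝ (Fin n),
        K₁ * (lam ^ (-(1 : ℝ) / 2 + ε)) ^ n ≤
          ∫ y in ball x (lam ^ (-(1 : ℝ) / 2 + ε)), (ψ y) ^ 2 ∧
        ∫ y in ball x (lam ^ (-(1 : ℝ) / 2 + ε)), (ψ y) ^ 2 ≤
          K₂ * (lam ^ (-(1 : ℝ) / 2 + ε)) ^ n) →
      ∀ Ω, IsNodalDomain ψ Ω →
        a₁ * lam ^ (-(1 : ℝ) / 2 - ε * ((n : ℝ) - 1) * ((n : ℝ) - 2) / (2 * (n : ℝ))) ≤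
          innerRadius Ω := by
  obtain ⟨a, ha, hradius⟩ := exists_mul_le_innerRadius hn hK₁ hK₂
  refine ⟨a, ha, fun ψ lam hlam hc hper hl hmass Ω hΩ => ?_⟩
  obtain ⟨x, hx, -⟩ := id hΩ
  rw [← inv_sqrt_mul_rpow_rpow hlam, ← sqrt_mul_rpow_neg_half_add hlam ε]
  exact hradius hper (hper.isEquidistributedWave hε hlam hc hl hmass hx) hΩ

theorem inner_radius_lower_bound_epsilon_scale
    (n : ℕ) (hn : 3 ≤ n) (ε : ℝ) (hε : 0 < ε)
    (K₁ K₂ : ℝ) (hK₁ : 0 < K₁) (hK₂ : 0 < K₂) :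
    ∃ r₀ a₁ : ℝ, 0 < r₀ ∧ 0 < a₁ ∧
      ∀ (ψ : EuclideanSpace ℝ (Fin n) → ℝ) (lam : ℝ),
        0 < lam → ContDiff ℝ (⊤ : ℕ∞) ψ → ZnPeriodic n ψ →
        (∀ x, lap n ψ x = -lam * ψ x) →
        lam ^ (-(1:ℝ)/2 + ε) < r₀ →
        (∀ x : EuclideanSpace ℝ (Fin n),
          K₁ * (lam ^ (-(1:ℝ)/2 + ε)) ^ n ≤
            (∫ y in Metric.ball x (lam ^ (-(1:ℝ)/2 + ε)), (ψ y)^2) ∧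
          (∫ y in Metric.ball x (lam ^ (-(1:ℝ)/2 + ε)), (ψ y)^2) ≤
            K₂ * (lam ^ (-(1:ℝ)/2 + ε)) ^ n) →
        ∀ Ω, IsNodalDomain ψ Ω →
          a₁ * lam ^ (-(1:ℝ)/2 - ε * ((n:ℝ)-1)*((n:ℝ)-2)/(2*(n:ℝ))) ≤ innerRadius Ω := by
  obtain ⟨a₁, ha₁, hradius⟩ :=
    inner_radius_lower_bound_epsilon_scale_general n hn ε hε.le K₁ K₂ hK₁ hK₂.le
  exact ⟨1, a₁, one_pos, ha₁, fun ψ lam hlam hs hper hl _ =>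
    hradius ψ lam hlam (contDiff_infty.1 hs 2) hper hl⟩
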